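/- arXiv:1405.6266 — 2 statements merged into one kernel-verified Lean document; each statement's English description precedes it below -/
import Mathlib

section
/- Fix an integer base g ≥ 2, a real ε > 0, and k ∈ ℕ. There exists δ = δ(ε,k) > 0 such that for all sufficiently large m, the number of integers a in the interval [1, m] that are not (ε,k)-normal to base g is at most m^{1−δ}. -/
open Filter

/-- Number of (possibly overlapping) occurrences of the string `σ` as a contiguous
substring of the string `w` (strings are lists of base-`g` digits). -/
def nu (w σ : List ℕ) : ℕ :=
  ((Finset.range w.length).filter (fun i => σ <+: w.drop i)).card

/-- The string of base-`g` digits of `a`, most significant digit first. -/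
def digs (g a : ℕ) : List ℕ :=
  (Nat.digits g a).reverse

/-- `L(a) = ⌊log_g a⌋ + 1`, the number of base-`g` digits of `a ≥ 1`. -/
def Lg (g a : ℕ) : ℕ :=
  Nat.log g a + 1

/-- A positive integer `a` is `(ε,k)`-normal to base `g` if every string `σ` of `k`
base-`g` digits satisfies `|ν(a,σ)/L(a) − g^{−k}| ≤ ε`. -/
def EKNormalInt (g : ℕ) (ε : ℝ) (k : ℕ) (a : ℕ) : Prop :=
  ∀ σ : List ℕ, σ.length = k → (∀ d ∈ σ, d < g) →
    |(nu (digs g a) σ : ℝ) / (Lg g a : ℝ) - 1 / (g : ℝ) ^ k| ≤ ε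

/-!
Cut the base-`g` expansion of an integer `a < g ^ L` into consecutive blocks of `k` digits, starting
at a fixed offset `r < k`. As `a` varies these blocks are independent and uniformly distributed, so
by Hoeffding's inequality a given word `σ` of length `k` occurs among them with a frequency that
differs from `g ^ (-k)` by a fixed amount only for `O((g * exp (-c)) ^ L)` integers `a`. Every
occurrence of `σ` in `a` belongs to exactly one offset, so a union bound over the words and the
offsets controls the non-normal integers with `L` digits, and summing the resulting geometric
progression over `L ≤ log_g m + 1` gives a power saving.
-/

open Finset Asymptotics

/-! ### Hoeffding's inequality by counting -/

section Hoeffding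

variable {ι : Type*} {s : Finset ι} {X : ι → ℝ} {t : ℝ}

-- Convexity of `exp` on `[-t, t]`, where `t x = (1 + x)/2 • t + (1 - x)/2 • (-t)`.
lemma exp_mul_le_cosh_add_mul_sinh {x : ℝ} (hx : |x| ≤ 1) (t : ℝ) :
    Real.exp (t * x) ≤ Real.cosh t + x * Real.sinh t := by
  obtain ⟨hx₁, hx₂⟩ := abs_le.1 hx
  have hconv := convexOn_exp.2 (Set.mem_univ t) (Set.mem_univ (-t))
    (show 0 ≤ (1 + x) / 2 by linarith) (show 0 ≤ (1 - x) / 2 by linarith) (by ring)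
  simp only [smul_eq_mul] at hconv
  rw [Real.cosh_eq, Real.sinh_eq]
  calc Real.exp (t * x) = Real.exp ((1 + x) / 2 * t + (1 - x) / 2 * -t) := by ring_nf
    _ ≤ (1 + x) / 2 * Real.exp t + (1 - x) / 2 * Real.exp (-t) := hconv
    _ = _ := by ring

lemma sum_exp_mul_le_card_mul_exp_sq (hX : ∀ i ∈ s, |X i| ≤ 1) (hsum : ∑ i ∈ s, X i = 0) (t : ℝ) :
    ∑ i ∈ s, Real.exp (t * X i) ≤ #s * Real.exp (t ^ 2 / 2) :=
  calc ∑ i ∈ s, Real.exp (t * X i) ≤ ∑ i ∈ s, (Real.cosh t + X i * Real.sinh t) :=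
        sum_le_sum fun i hi => exp_mul_le_cosh_add_mul_sinh (hX i hi) t
    _ = #s * Real.cosh t := by
        rw [sum_add_distrib, ← sum_mul, hsum, zero_mul, add_zero, sum_const, nsmul_eq_mul]
    _ ≤ #s * Real.exp (t ^ 2 / 2) := by gcongr; exact Real.cosh_le_exp_half_sq t

lemma card_filter_le_exp_mul_sum_exp (s : Finset ι) (X : ι → ℝ) (c : ℝ) (ht : 0 ≤ t) :
    (#{i ∈ s | c ≤ X i} : ℝ) ≤ Real.exp (-(t * c)) * ∑ i ∈ s, Real.exp (t * X i) := by
  rw [mul_sum, card_filter, Nat.cast_sum]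
  refine sum_le_sum fun i _ => ?_
  rw [← Real.exp_add]
  split_ifs with hc
  · rw [Nat.cast_one]
    exact Real.one_le_exp (by nlinarith)
  · rw [Nat.cast_zero]
    positivity

end Hoeffding

/-! ### Blocks of digits -/

/-- The number whose base-`g` expansion, padded with zeros, consists of the `k` digits of `a` at the
positions `j, …, j + k - 1`. Positions are counted from the least significant digit, which has
position `0`. -/
def digitBlock (g k j a : ℕ) : ℕ :=
  a / g ^ j % g ^ k

lemma digitBlock_add (g k i j a : ℕ) :
    digitBlock g k (i + j) a = digitBlock g k j (a / g ^ i) := by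
  rw [digitBlock, digitBlock, Nat.div_div_eq_div_mul, pow_add]

section BlockSums

variable {R : Type*} [CommSemiring R]

lemma sum_range_mul_mod_div (f F : ℕ → R) (m n : ℕ) :
    ∑ a ∈ range (m * n), f (a % m) * F (a / m) =
      (∑ d ∈ range m, f d) * ∑ b ∈ range n, F b := by
  induction n with
  | zero => simp
  | succ n ih =>
    rw [Nat.mul_succ, sum_range_add, ih, sum_range_succ, mul_add, sum_mul (range m) f (F n)]
    congr 1
    refine sum_congr rfl fun d hd => ?_
    have hdm : d < m := mem_range.1 hd
    rw [Nat.mul_add_mod, Nat.mod_eq_of_lt hdm, Nat.mul_add_div (by lia), Nat.div_eq_of_lt hdm,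
      add_zero]

lemma sum_prod_digitBlock_mul (f : ℕ → R) (g k M T : ℕ) :
    ∑ a ∈ range (g ^ (k * M + T)), ∏ i ∈ range M, f (digitBlock g k (k * i) a) =
      (∑ d ∈ range (g ^ k), f d) ^ M * (g ^ T : ℕ) := by
  induction M with
  | zero => simp
  | succ M ih =>
    have hpeel (a : ℕ) : ∏ i ∈ range (M + 1), f (digitBlock g k (k * i) a) =
        f (a % g ^ k) * ∏ i ∈ range M, f (digitBlock g k (k * i) (a / g ^ k)) := by
      rw [prod_range_succ', mul_comm]
      congr 1
      · simp [digitBlock]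
      · simp only [mul_add, mul_one, add_comm _ k, digitBlock_add]
    rw [sum_congr rfl fun a _ => hpeel a, show k * (M + 1) + T = k + (k * M + T) by ring, pow_add,
      sum_range_mul_mod_div (f := f)
        (F := fun b => ∏ i ∈ range M, f (digitBlock g k (k * i) b)), ih, pow_succ']
    ring

-- The blocks are independent and uniformly distributed: the sum of the product factorises.
lemma sum_prod_digitBlock (f : ℕ → R) {g k r M L : ℕ} (hL : r + k * M ≤ L) :
    ∑ a ∈ range (g ^ L), ∏ i ∈ range M, f (digitBlock g k (r + k * i) a) =
      (g ^ (L - k * M) : ℕ) * (∑ d ∈ range (g ^ k), f d) ^ M := by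
  obtain ⟨T, rfl⟩ := Nat.exists_eq_add_of_le hL
  have hdrop := sum_range_mul_mod_div (fun _ => (1 : R))
    (fun b => ∏ i ∈ range M, f (digitBlock g k (k * i) b)) (g ^ r) (g ^ (k * M + T))
  simp only [one_mul, sum_const, card_range, nsmul_one] at hdrop
  simp only [digitBlock_add g k r]
  rw [add_assoc, pow_add, hdrop, sum_prod_digitBlock_mul,
    show r + (k * M + T) - k * M = r + T by lia, pow_add, Nat.cast_mul]
  ring

end BlockSums

section BlockDeviations

variable {g k r M L n : ℕ} {X : ℕ → ℝ} {η : ℝ}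

lemma sum_exp_sum_digitBlock_le (hX : ∀ d < g ^ k, |X d| ≤ 1) (hsum : ∑ d ∈ range (g ^ k), X d = 0)
    (hL : r + k * M ≤ L) (t : ℝ) :
    ∑ a ∈ range (g ^ L), Real.exp (t * ∑ i ∈ range M, X (digitBlock g k (r + k * i) a)) ≤
      (g : ℝ) ^ L * Real.exp (M * (t ^ 2 / 2)) := by
  simp only [mul_sum, Real.exp_sum]
  rw [sum_prod_digitBlock (fun d => Real.exp (t * X d)) hL]
  calc ((g ^ (L - k * M) : ℕ) : ℝ) * (∑ d ∈ range (g ^ k), Real.exp (t * X d)) ^ M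
      ≤ (g ^ (L - k * M) : ℕ) * (#(range (g ^ k)) * Real.exp (t ^ 2 / 2)) ^ M := by
        gcongr
        exact sum_exp_mul_le_card_mul_exp_sq (fun d hd => hX d (mem_range.1 hd)) hsum t
    _ = (g : ℝ) ^ (L - k * M + k * M) * Real.exp (M * (t ^ 2 / 2)) := by
        rw [card_range, mul_pow, Real.exp_nat_mul, pow_add, pow_mul]
        push_cast
        ring
    _ = _ := by rw [Nat.sub_add_cancel (by lia)]

lemma card_mul_le_sum_digitBlock_le (hX : ∀ d < g ^ k, |X d| ≤ 1)
    (hsum : ∑ d ∈ range (g ^ k), X d = 0) (hL : r + k * M ≤ L) (hMn : M ≤ n) (hη : 0 ≤ η) :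
    (#{a ∈ range (g ^ L) | η * n ≤ ∑ i ∈ range M, X (digitBlock g k (r + k * i) a)} : ℝ) ≤
      (g : ℝ) ^ L * Real.exp (-(η ^ 2 / 2) * n) := by
  calc (#{a ∈ range (g ^ L) | η * n ≤ ∑ i ∈ range M, X (digitBlock g k (r + k * i) a)} : ℝ)
      ≤ Real.exp (-(η * (η * n))) *
          ∑ a ∈ range (g ^ L), Real.exp (η * ∑ i ∈ range M, X (digitBlock g k (r + k * i) a)) :=
        card_filter_le_exp_mul_sum_exp _ _ _ hη
    _ ≤ Real.exp (-(η * (η * n))) * ((g : ℝ) ^ L * Real.exp (n * (η ^ 2 / 2))) := by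
        gcongr
        refine (sum_exp_sum_digitBlock_le hX hsum hL η).trans ?_
        gcongr
    _ = _ := by
        rw [mul_left_comm, ← Real.exp_add]
        ring_nf

lemma card_mul_le_abs_sum_digitBlock_le (hX : ∀ d < g ^ k, |X d| ≤ 1)
    (hsum : ∑ d ∈ range (g ^ k), X d = 0) (hL : r + k * M ≤ L) (hMn : M ≤ n) (hη : 0 ≤ η) :
    (#{a ∈ range (g ^ L) | η * n ≤ |∑ i ∈ range M, X (digitBlock g k (r + k * i) a)|} : ℝ) ≤
      2 * ((g : ℝ) ^ L * Real.exp (-(η ^ 2 / 2) * n)) := by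
  have hupper := card_mul_le_sum_digitBlock_le hX hsum hL hMn hη
  have hlower := card_mul_le_sum_digitBlock_le (X := -X) (by simpa using hX) (by simpa using hsum)
    hL hMn hη
  simp only [Pi.neg_apply, sum_neg_distrib] at hlower
  simp only [le_abs, filter_or]
  refine (Nat.cast_le.2 (card_union_le _ _)).trans ?_
  push_cast
  linarith

end BlockDeviations

/-! ### Occurrences of a word as blocks of digits -/

lemma length_digits_eq_Lg {g a : ℕ} (hg : 1 < g) (ha : a ≠ 0) : (Nat.digits g a).length = Lg g a :=
  Nat.length_digits g a hg ha

section Occurrences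

variable {g : ℕ} {σ : List ℕ}

lemma isPrefix_drop_digs_iff (hg : 1 < g) (hσ : ∀ d ∈ σ, d < g) {a i j : ℕ}
    (hij : i + j + σ.length = (Nat.digits g a).length) :
    σ <+: (digs g a).drop i ↔ digitBlock g σ.length j a = Nat.ofDigits g σ.reverse := by
  set w := Nat.digits g a with hw
  have hwg : ∀ d ∈ w, d < g := fun d => Nat.digits_lt_base hg
  have hblock : digitBlock g σ.length j a = Nat.ofDigits g ((w.drop j).take σ.length) := by
    rw [digitBlock, Nat.self_div_pow_eq_ofDigits_drop j a hg,
      Nat.ofDigits_mod_pow_eq_ofDigits_take _ (by lia) _ fun d h => hwg d (List.mem_of_mem_drop h)]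
  have hprefix : σ <+: (digs g a).drop i ↔ (w.drop j).take σ.length = σ.reverse := by
    have htake : (w.take (j + σ.length)).length - σ.length = j := by
      rw [List.length_take]
      lia
    rw [List.prefix_iff_eq_take, digs, ← hw, List.drop_reverse, List.take_reverse,
      ← List.reverse_inj, List.reverse_reverse, show w.length - i = j + σ.length by lia, htake,
      List.drop_take, Nat.add_sub_cancel_left, eq_comm]
  rw [hprefix, hblock]
  refine ⟨fun h => by rw [h], Nat.ofDigits_inj_of_len_eq hg ?_ ?_ ?_⟩
  · simp only [List.length_take, List.length_drop, List.length_reverse]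
    lia
  · exact fun d h => hwg d (List.mem_of_mem_drop (List.mem_of_mem_take h))
  · exact fun d h => hσ d (List.mem_reverse.1 h)

lemma nu_eq_card_range (w : List ℕ) (hσ : σ ≠ []) :
    nu w σ = #{i ∈ range (w.length + 1 - σ.length) | σ <+: w.drop i} := by
  have hlen : 0 < σ.length := List.length_pos_iff.2 hσ
  rw [nu]
  congr 1
  ext i
  simp only [mem_filter, mem_range, and_congr_left_iff]
  intro hpre
  have := hpre.length_le
  rw [List.length_drop] at this
  lia

lemma nu_digs_eq_card_digitBlock (hg : 1 < g) (hσ : ∀ d ∈ σ, d < g) (hne : σ ≠ []) {a : ℕ}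
    (ha : a ≠ 0) :
    nu (digs g a) σ = #{j ∈ range (Lg g a + 1 - σ.length) |
      digitBlock g σ.length j a = Nat.ofDigits g σ.reverse} := by
  have hlen : (digs g a).length = Lg g a := by
    rw [digs, List.length_reverse, length_digits_eq_Lg hg ha]
  rw [nu_eq_card_range _ hne, hlen, card_filter, card_filter, ← sum_range_reflect]
  refine sum_congr rfl fun j hj => ?_
  have hj := mem_range.1 hj
  simp only [isPrefix_drop_digs_iff hg hσ (j := j)
    (show Lg g a + 1 - σ.length - 1 - j + j + σ.length = _ by rw [length_digits_eq_Lg hg ha]; lia)]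

end Occurrences

/-! ### Splitting the positions into residue classes -/

lemma sum_range_eq_sum_residues {A : Type*} [AddCommMonoid A] (F : ℕ → A) {k : ℕ} (hk : 0 < k)
    (L : ℕ) :
    ∑ j ∈ range (L + 1 - k), F j =
      ∑ r ∈ range k, ∑ i ∈ range ((L - r) / k), F (r + k * i) := by
  have hmem (r i : ℕ) : i < (L - r) / k ↔ r + k * i + k ≤ L := by
    rw [← Nat.add_one_le_iff, Nat.le_div_iff_mul_le hk, add_mul, one_mul, mul_comm i]
    lia
  rw [sum_sigma']
  refine sum_bij' (fun j _ => ⟨j % k, j / k⟩) (fun p _ => p.1 + k * p.2) ?_ ?_ ?_ ?_ ?_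
  · intro j hj
    have hj := mem_range.1 hj
    rw [mem_sigma, mem_range, mem_range, hmem, Nat.mod_add_div]
    exact ⟨Nat.mod_lt j hk, by lia⟩
  · rintro ⟨r, i⟩ hp
    rw [mem_sigma, mem_range, mem_range, hmem] at hp
    exact mem_range.2 (by lia)
  · exact fun j _ => Nat.mod_add_div j k
  · rintro ⟨r, i⟩ hp
    have hr : r < k := mem_range.1 (mem_sigma.1 hp).1
    simp [Nat.add_mul_div_left _ _ hk, Nat.mod_eq_of_lt hr, Nat.div_eq_of_lt hr]
  · exact fun j _ => by rw [Nat.mod_add_div]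

/-- The indicator function of `s`, centred so that its mean over `{0, …, G - 1}` vanishes. -/
noncomputable def centredIndicator (G s d : ℕ) : ℝ :=
  (if d = s then 1 else 0) - 1 / G

lemma abs_centredIndicator_le_one (G s d : ℕ) : |centredIndicator G s d| ≤ 1 := by
  have hinv₀ : 0 ≤ 1 / (G : ℝ) := by positivity
  have hinv₁ : 1 / (G : ℝ) ≤ 1 := by simpa using Nat.cast_inv_le_one G
  rw [centredIndicator, abs_le]
  split_ifs <;> constructor <;> linarith

lemma sum_centredIndicator {G s : ℕ} (hs : s < G) : ∑ d ∈ range G, centredIndicator G s d = 0 := by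
  have hG : (G : ℝ) ≠ 0 := Nat.cast_ne_zero.2 (by lia)
  simp [centredIndicator, hs, hG]

/-- The number of occurrences of the block `s` among the length-`k` digit blocks of `a` that start
at positions congruent to `r` modulo `k` and fit into the lowest `L` digits, minus its expected
value. -/
noncomputable def residueDeviation (g k s L r a : ℕ) : ℝ :=
  ∑ i ∈ range ((L - r) / k), centredIndicator (g ^ k) s (digitBlock g k (r + k * i) a)

section Normality

variable {g k : ℕ} {ε : ℝ}

lemma nu_digs_sub_eq_sum_residueDeviation (hg : 1 < g) {σ : List ℕ} (hσ : ∀ d ∈ σ, d < g)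
    (hne : σ ≠ []) {a : ℕ} (ha : a ≠ 0) :
    (nu (digs g a) σ : ℝ) - (Lg g a + 1 - σ.length : ℕ) * (1 / (g : ℝ) ^ σ.length) =
      ∑ r ∈ range σ.length,
        residueDeviation g σ.length (Nat.ofDigits g σ.reverse) (Lg g a) r a := by
  simp only [residueDeviation]
  rw [← sum_range_eq_sum_residues (fun j => centredIndicator (g ^ σ.length)
    (Nat.ofDigits g σ.reverse) (digitBlock g σ.length j a)) (List.length_pos_iff.2 hne),
    nu_digs_eq_card_digitBlock hg hσ hne ha]
  simp [centredIndicator]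

lemma ekNormalInt_of_abs_residueDeviation_le (hg : 1 < g) (hk : 0 < k) {a : ℕ} (ha : a ≠ 0)
    (hL : 2 * k ≤ ε * Lg g a)
    (hdev : ∀ s < g ^ k, ∀ r < k, |residueDeviation g k s (Lg g a) r a| ≤ ε / (2 * k) * Lg g a) :
    EKNormalInt g ε k a := by
  rintro σ rfl hσ
  set L := Lg g a
  set n : ℕ := L + 1 - σ.length
  set q : ℝ := 1 / (g : ℝ) ^ σ.length with hq
  have hLpos : (0 : ℝ) < L := Nat.cast_pos.2 (Nat.succ_pos _)
  have hσpos : (0 : ℝ) < σ.length := Nat.cast_pos.2 hk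
  have hs : Nat.ofDigits g σ.reverse < g ^ σ.length := by
    simpa using Nat.ofDigits_lt_base_pow_length hg (l := σ.reverse) (by simpa using hσ)
  have hcount : |(nu (digs g a) σ : ℝ) - n * q| ≤ ε * L / 2 := by
    rw [nu_digs_sub_eq_sum_residueDeviation hg hσ (List.length_pos_iff.1 hk) ha]
    calc _ ≤ ∑ r ∈ range σ.length, ε / (2 * σ.length) * L :=
          (abs_sum_le_sum_abs _ _).trans (sum_le_sum fun r hr => hdev _ hs r (mem_range.1 hr))
      _ = ε * L / 2 := by
          rw [sum_const, card_range, nsmul_eq_mul]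
          field_simp
  have hpositions : |(n : ℝ) * q - L * q| ≤ σ.length := by
    have hnL : |(n : ℝ) - L| ≤ σ.length := by
      have h₁ : (L : ℝ) ≤ n + σ.length := by exact_mod_cast (by lia : L ≤ n + σ.length)
      have h₂ : (n : ℝ) ≤ L := by exact_mod_cast (by lia : n ≤ L)
      rw [abs_le]
      constructor <;> linarith
    have hq₁ : |q| ≤ 1 := by
      rw [abs_of_nonneg (by positivity), hq]
      exact div_le_one_of_le₀ (one_le_pow₀ (by exact_mod_cast hg.le)) (by positivity)
    rw [← sub_mul, abs_mul]
    exact (mul_le_of_le_one_right (abs_nonneg _) hq₁).trans hnL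
  have htotal : |(nu (digs g a) σ : ℝ) - L * q| ≤ ε * L := by
    linarith [abs_sub_le (nu (digs g a) σ : ℝ) (n * q) (L * q)]
  rwa [div_sub' hLpos.ne', abs_div, abs_of_pos hLpos, div_le_iff₀ hLpos]

lemma ekNormalInt_zero (hg : 1 < g) (hε : 0 ≤ ε) {a : ℕ} (ha : a ≠ 0) : EKNormalInt g ε 0 a := by
  intro σ hσ _
  obtain rfl := List.length_eq_zero_iff.1 hσ
  have hnu : nu (digs g a) [] = Lg g a := by simp [nu, digs, length_digits_eq_Lg hg ha]
  have hLg : (Lg g a : ℝ) ≠ 0 := Nat.cast_ne_zero.2 (Nat.succ_ne_zero _)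
  simpa [hnu, hLg] using hε

end Normality

/-! ### Counting non-normal integers with a given number of digits -/

section Counting

variable {g k : ℕ} {ε : ℝ}

lemma card_le_abs_residueDeviation_le {s r L : ℕ} (hs : s < g ^ k) (hr : r ≤ L)
    {η : ℝ} (hη : 0 ≤ η) :
    (#{a ∈ range (g ^ L) | η * L ≤ |residueDeviation g k s L r a|} : ℝ) ≤
      2 * ((g : ℝ) ^ L * Real.exp (-(η ^ 2 / 2) * L)) := by
  refine card_mul_le_abs_sum_digitBlock_le (fun d _ => abs_centredIndicator_le_one _ s d)
    (sum_centredIndicator hs) ?_ ((Nat.div_le_self _ _).trans (Nat.sub_le _ _)) hη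
  have := Nat.mul_div_le (L - r) k
  lia

open scoped Classical in
lemma card_not_ekNormalInt_Ico_pow_le (hg : 1 < g) (hk : 0 < k) (hε : 0 ≤ ε) {n : ℕ}
    (hkn : k ≤ n) (hn : 2 * k ≤ ε * n) :
    (#{a ∈ Ico (g ^ n) (g ^ (n + 1)) | ¬ EKNormalInt g ε k a} : ℝ) ≤
      2 * k * (g : ℝ) ^ k * (g * Real.exp (-((ε / (2 * k)) ^ 2 / 2))) ^ (n + 1) := by
  set η := ε / (2 * k)
  let bad (p : ℕ × ℕ) : Finset ℕ :=
    {a ∈ range (g ^ (n + 1)) | η * (n + 1 : ℕ) ≤ |residueDeviation g k p.1 (n + 1) p.2 a|}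
  have hcover : {a ∈ Ico (g ^ n) (g ^ (n + 1)) | ¬ EKNormalInt g ε k a} ⊆
      (range (g ^ k) ×ˢ range k).biUnion bad := by
    intro a ha
    obtain ⟨hIco, hnormal⟩ := mem_filter.1 ha
    obtain ⟨hlow, hupp⟩ := mem_Ico.1 hIco
    have hLg : Lg g a = n + 1 := by rw [Lg, Nat.log_eq_of_pow_le_of_lt_pow hlow hupp]
    have ha₀ : a ≠ 0 := ((pow_pos (by lia) n).trans_le hlow).ne'
    have hL : 2 * k ≤ ε * Lg g a := by
      rw [hLg, Nat.cast_add_one]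
      linarith
    have hdev := mt (ekNormalInt_of_abs_residueDeviation_le hg hk ha₀ hL) hnormal
    rw [hLg] at hdev
    push Not at hdev
    obtain ⟨s, hs, r, hr, hsr⟩ := hdev
    exact mem_biUnion.2 ⟨(s, r), mem_product.2 ⟨mem_range.2 hs, mem_range.2 hr⟩,
      mem_filter.2 ⟨mem_range.2 hupp, hsr.le⟩⟩
  calc (#{a ∈ Ico (g ^ n) (g ^ (n + 1)) | ¬ EKNormalInt g ε k a} : ℝ)
      ≤ ∑ p ∈ range (g ^ k) ×ˢ range k, (#(bad p) : ℝ) := by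
        exact_mod_cast (card_le_card hcover).trans card_biUnion_le
    _ ≤ ∑ p ∈ range (g ^ k) ×ˢ range k,
          2 * ((g : ℝ) ^ (n + 1) * Real.exp (-(η ^ 2 / 2) * (n + 1 : ℕ))) := by
        refine sum_le_sum fun p hp => ?_
        obtain ⟨hs, hr⟩ := mem_product.1 hp
        have hr := mem_range.1 hr
        exact card_le_abs_residueDeviation_le (mem_range.1 hs) (by lia) (by positivity)
    _ = _ := by
        rw [sum_const, card_product, card_range, card_range, nsmul_eq_mul, mul_pow,
          ← Real.exp_nat_mul, mul_comm (-(η ^ 2 / 2))]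
        push_cast
        ring

open scoped Classical in
lemma exists_isBigO_card_not_ekNormalInt_Ico_pow (hg : 1 < g) (hk : 0 < k) (hε : 0 < ε) :
    ∃ ρ : ℝ, 0 < ρ ∧ ρ < g ∧
      (fun n : ℕ => (#{a ∈ Ico (g ^ n) (g ^ (n + 1)) | ¬ EKNormalInt g ε k a} : ℝ))
        =O[atTop] fun n => ρ ^ n := by
  have hg₀ : (0 : ℝ) < g := by exact_mod_cast zero_lt_one.trans hg
  set ρ : ℝ := g * Real.exp (-((ε / (2 * k)) ^ 2 / 2))
  refine ⟨ρ, by positivity, ?_, .of_bound (2 * k * (g : ℝ) ^ k * ρ) ?_⟩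
  · have hη : 0 < (ε / (2 * k)) ^ 2 / 2 := by positivity
    exact mul_lt_of_lt_one_right hg₀ (Real.exp_lt_one_iff.2 (by linarith))
  · have hlarge : ∀ᶠ n : ℕ in atTop, 2 * k / ε ≤ n :=
      tendsto_natCast_atTop_atTop.eventually_ge_atTop _
    filter_upwards [eventually_ge_atTop k, hlarge] with n hkn hn
    rw [div_le_iff₀' hε] at hn
    rw [Real.norm_of_nonneg (by positivity), Real.norm_of_nonneg (by positivity)]
    exact (card_not_ekNormalInt_Ico_pow_le hg hk hε.le hkn hn).trans_eq (by ring)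

end Counting

/-! ### From digit lengths to initial segments -/

lemma isLittleO_rpow_rpow_atTop_of_lt {p q : ℝ} (hpq : p < q) :
    (fun x : ℝ => x ^ p) =o[atTop] fun x => x ^ q := by
  refine isLittleO_of_tendsto' ?_ ?_
  · filter_upwards [eventually_gt_atTop 0] with x hx h
    exact absurd h (Real.rpow_pos_of_pos hx q).ne'
  · refine (tendsto_rpow_neg_atTop (sub_pos.2 hpq)).congr' ?_
    filter_upwards [eventually_gt_atTop 0] with x hx
    rw [neg_sub, Real.rpow_sub hx]

section Summation

variable {g : ℕ} {ρ : ℝ} (P : ℕ → Prop) [DecidablePred P]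

lemma card_filter_Icc_le_sum_card_filter_Ico_pow (hg : 1 < g) (m : ℕ) :
    #{a ∈ Icc 1 m | P a} ≤
      ∑ n ∈ range (Nat.log g m + 1), #{a ∈ Ico (g ^ n) (g ^ (n + 1)) | P a} := by
  refine (card_le_card fun a ha => ?_).trans card_biUnion_le
  obtain ⟨hIcc, hPa⟩ := mem_filter.1 ha
  obtain ⟨ha₁, ham⟩ := mem_Icc.1 hIcc
  refine mem_biUnion.2 ⟨Nat.log g a, ?_, mem_filter.2 ⟨mem_Ico.2 ⟨?_, ?_⟩, hPa⟩⟩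
  · exact mem_range.2 (Nat.lt_succ_of_le (Nat.log_mono_right ham))
  · exact Nat.pow_log_le_self g (by lia)
  · exact Nat.lt_pow_succ_log_self hg a

lemma pow_natLog_le_rpow_logb (hg : 1 < g) (hρ : 1 ≤ ρ) {m : ℕ} (hm : m ≠ 0) :
    ρ ^ Nat.log g m ≤ (m : ℝ) ^ Real.logb g ρ := by
  have hg₁ : (1 : ℝ) < g := by exact_mod_cast hg
  calc ρ ^ Nat.log g m = ((g : ℝ) ^ Real.logb g ρ) ^ Nat.log g m := by
        rw [Real.rpow_logb (by linarith) hg₁.ne' (by linarith)]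
    _ = ((g : ℝ) ^ Nat.log g m) ^ Real.logb g ρ := by
        rw [← Real.rpow_mul_natCast (by positivity), mul_comm,
          Real.rpow_natCast_mul (by positivity)]
    _ ≤ (m : ℝ) ^ Real.logb g ρ :=
        Real.rpow_le_rpow (by positivity) (by exact_mod_cast Nat.pow_log_le_self g hm)
          (Real.logb_nonneg hg₁ hρ)

variable {P}

lemma isBigO_card_filter_Icc_rpow (hg : 1 < g) (hρ : 1 < ρ)
    (hP : (fun n : ℕ => (#{a ∈ Ico (g ^ n) (g ^ (n + 1)) | P a} : ℝ)) =O[atTop] fun n => ρ ^ n) :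
    (fun m : ℕ => (#{a ∈ Icc 1 m | P a} : ℝ)) =O[atTop] fun m => (m : ℝ) ^ Real.logb g ρ := by
  obtain ⟨C, hC, hbound⟩ := bound_of_isBigO_nat_atTop hP
  have hlevel (n : ℕ) : (#{a ∈ Ico (g ^ n) (g ^ (n + 1)) | P a} : ℝ) ≤ C * ρ ^ n := by
    have := hbound (x := n) (by positivity)
    rwa [Real.norm_of_nonneg (by positivity), Real.norm_of_nonneg (by positivity)] at this
  have : 0 < ρ - 1 := sub_pos.2 hρ
  refine .of_bound (C * (ρ / (ρ - 1))) ?_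
  filter_upwards [eventually_ne_atTop 0] with m hm
  rw [Real.norm_of_nonneg (by positivity), Real.norm_of_nonneg (by positivity)]
  set N := Nat.log g m
  calc (#{a ∈ Icc 1 m | P a} : ℝ)
      ≤ ∑ n ∈ range (N + 1), (#{a ∈ Ico (g ^ n) (g ^ (n + 1)) | P a} : ℝ) := by
        exact_mod_cast card_filter_Icc_le_sum_card_filter_Ico_pow P hg m
    _ ≤ C * ((ρ ^ (N + 1) - 1) / (ρ - 1)) := by
        rw [← geom_sum_eq hρ.ne', mul_sum]
        exact sum_le_sum fun n _ => hlevel n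
    _ ≤ C * (ρ ^ (N + 1) / (ρ - 1)) := by gcongr; linarith
    _ = C * (ρ / (ρ - 1)) * ρ ^ N := by ring
    _ ≤ C * (ρ / (ρ - 1)) * (m : ℝ) ^ Real.logb g ρ := by
        gcongr
        exact pow_natLog_le_rpow_logb hg hρ.le hm

lemma exists_eventually_card_filter_Icc_le_rpow (hg : 1 < g) (hρ : 0 < ρ) (hρg : ρ < g)
    (hP : (fun n : ℕ => (#{a ∈ Ico (g ^ n) (g ^ (n + 1)) | P a} : ℝ)) =O[atTop] fun n => ρ ^ n) :
    ∃ δ : ℝ, 0 < δ ∧ ∀ᶠ m : ℕ in atTop, (#{a ∈ Icc 1 m | P a} : ℝ) ≤ (m : ℝ) ^ (1 - δ) := by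
  have hg₁ : (1 : ℝ) < g := by exact_mod_cast hg
  obtain ⟨κ, hκ, hκg⟩ := exists_between (max_lt hρg hg₁)
  obtain ⟨hρκ, hκ₁⟩ := max_lt_iff.1 hκ
  have hpow : (fun n : ℕ => ρ ^ n) =O[atTop] fun n => κ ^ n := .of_norm_le fun n => by
    rw [Real.norm_of_nonneg (by positivity)]
    exact pow_le_pow_left₀ hρ.le hρκ.le n
  have hexp : Real.logb g κ < 1 := by
    rwa [Real.logb_lt_iff_lt_rpow hg₁ (by linarith), Real.rpow_one]
  obtain ⟨θ, hθ, hθ₁⟩ := exists_between hexp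
  refine ⟨1 - θ, sub_pos.2 hθ₁, ?_⟩
  rw [sub_sub_cancel]
  have hlittle := (isBigO_card_filter_Icc_rpow hg hκ₁ (hP.trans hpow)).trans_isLittleO
    ((isLittleO_rpow_rpow_atTop_of_lt hθ).comp_tendsto tendsto_natCast_atTop_atTop)
  filter_upwards [hlittle.eventuallyLE] with m hm
  simpa [Real.norm_of_nonneg, Real.rpow_nonneg, abs_of_nonneg] using hm

end Summation

open scoped Classical in
theorem copeland_erdos_integer_count (g : ℕ) (hg : 2 ≤ g) (ε : ℝ) (hε : 0 < ε) (k : ℕ) :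
    ∃ δ : ℝ, 0 < δ ∧ ∀ᶠ m : ℕ in atTop,
      (((Finset.Icc 1 m).filter fun a => ¬ EKNormalInt g ε k a).card : ℝ)
        ≤ (m : ℝ) ^ (1 - δ) := by
  obtain rfl | hk := k.eq_zero_or_pos
  · refine ⟨1, one_pos, .of_forall fun m => ?_⟩
    have hempty : {a ∈ Icc 1 m | ¬ EKNormalInt g ε 0 a} = ∅ :=
      filter_eq_empty_iff.2 fun a ha =>
        not_not_intro (ekNormalInt_zero hg hε.le (by have := mem_Icc.1 ha; lia))
    simp [hempty]
  · obtain ⟨ρ, hρ, hρg, hcount⟩ := exists_isBigO_card_not_ekNormalInt_Ico_pow hg hk hε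
    exact exists_eventually_card_filter_Icc_le_rpow hg hρ hρg hcount
end

section
/- Let g ≥ 2 be an integer base. The infinite base-g digit sequence obtained by concatenating the base-g expansions of the squares 1², 2², 3², 4², … in order (equivalently, the real number 0.\bar{1}\bar{4}\bar{9}\bar{16}\bar{25}… in base g) is normal to base g. -/
open Filter

/-- The `N`-th digit (indexed from `0`) of the infinite base-`g` digit sequence obtained by
concatenating the digit strings of `a 1`, `a 2`, `a 3`, … . -/
def concatDigit (g : ℕ) (a : ℕ → ℕ) (N : ℕ) : ℕ :=
  (((List.range (N + 1)).map (fun n => digs g (a (n + 1)))).flatten).getD N 0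

/-- An infinite sequence `x` of base-`g` digits is normal to base `g` if for every nonempty
string `σ` of base-`g` digits, the frequency of occurrences of `σ` among the first `N` digits
tends to `g^{-|σ|}`. -/
def IsNormalSeq (g : ℕ) (x : ℕ → ℕ) : Prop :=
  ∀ σ : List ℕ, σ ≠ [] → (∀ d ∈ σ, d < g) →
    Tendsto (fun N : ℕ => (nu ((List.range N).map x) σ : ℝ) / (N : ℝ)) atTop
      (nhds (1 / (g : ℝ) ^ σ.length))

/-!
Up to the `O(M)` occurrences of `σ` straddling two consecutive squares, which are negligible
against the `≈ 2 M log_g M` digits of `1², …, M²`, it suffices to count, for each digit position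
`i`, the `n < M` for which the `k = |σ|` digits of `n²` at `i, …, i + k - 1` spell `σ`, i.e. for
which `⌊n² / g ^ i⌋` is in a given residue class modulo `K = g ^ k`. Write `M ≈ g ^ t`.

* For `i < t`, take a power `P` of `g` slightly below `g ^ i` and a power `Q ∣ P`. Replacing `n` by
  `n + b * P` changes `⌊n² / P⌋` by `2 * n * b` modulo `Q`, so as `b` varies these residues are
  equidistributed up to an error `gcd (2 * n, Q)`, which is small on average over `n`.
* For `t < i < 2 * t`, the function `n² / g ^ i` is convex and spends at least as much time (up to
  one unit) in `[u, u + 1)` as in any later `[v, v + 1)`. Comparing residue classes interval by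
  interval shows that any two of them are hit almost equally often.

Both arguments bound each class from above by `M / K` up to a factor `1 + O(g ^ (-e))`, and since
the `K` counts add up to `M`, all of them are close to `M / K`. Only `O(e)` of the `≈ 2 * t`
positions, near `0`, `t` and `2 * t`, are not covered, so averaging over positions gives the
frequency `1 / K`.
-/

open Finset Topology

section Occurrences

variable (u v σ : List ℕ)

lemma nu_append : nu (u ++ v) σ = #{i ∈ range u.length | σ <+: (u ++ v).drop i} + nu v σ := by
  simp only [nu, card_filter, List.length_append, sum_range_add, List.drop_append,
    Nat.add_sub_cancel_left, List.drop_eq_nil_of_le (Nat.le_add_right _ _), List.nil_append]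

lemma nu_le_length : nu u σ ≤ u.length :=
  (card_filter_le _ _).trans_eq (card_range _)

lemma nu_add_nu_le_nu_append : nu u σ + nu v σ ≤ nu (u ++ v) σ := by
  rw [nu_append]
  refine Nat.add_le_add_right (card_le_card fun i hi => ?_) _
  obtain ⟨hi, hσ⟩ := mem_filter.1 hi
  rw [mem_filter, List.drop_append_of_le_length (mem_range.1 hi).le]
  exact ⟨hi, hσ.trans (List.prefix_append _ _)⟩

lemma nu_append_le : nu (u ++ v) σ ≤ nu u σ + nu v σ + σ.length := by
  have inside_or_straddling : {i ∈ range u.length | σ <+: (u ++ v).drop i} ⊆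
      {i ∈ range u.length | σ <+: u.drop i} ∪ Ico (u.length - σ.length) u.length := by
    intro i hi
    simp only [mem_filter, mem_range, mem_union, mem_Ico] at hi ⊢
    obtain ⟨hi, hσ⟩ := hi
    by_cases h : i + σ.length ≤ u.length
    · rw [List.drop_append_of_le_length hi.le] at hσ
      exact .inl ⟨hi, List.prefix_of_prefix_length_le hσ (List.prefix_append _ _)
        (by rw [List.length_drop]; lia)⟩
    · exact .inr (by lia)
  have hcard := (card_le_card inside_or_straddling).trans (card_union_le _ _)
  rw [Nat.card_Ico] at hcard
  rw [nu_append]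
  change _ ≤ nu u σ + _ at hcard
  lia

variable {u v} in
lemma nu_le_nu_of_prefix (h : u <+: v) : nu u σ ≤ nu v σ := by
  obtain ⟨w, rfl⟩ := h
  exact (Nat.le_add_right _ _).trans (nu_add_nu_le_nu_append u w σ)

variable {u} in
lemma sum_nu_singleton {g : ℕ} (hu : ∀ d ∈ u, d < g) : ∑ d ∈ range g, nu u [d] = u.length := by
  have singleton_prefix_iff (d i : ℕ) (hi : i < u.length) : [d] <+: u.drop i ↔ u.getD i 0 = d := by
    rw [List.drop_eq_getElem_cons hi, List.singleton_prefix_cons_iff, List.getD_eq_getElem _ _ hi,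
      eq_comm]
  have hmaps : ∀ i ∈ range u.length, u.getD i 0 ∈ range g := by
    intro i hi
    rw [mem_range] at hi ⊢
    rw [List.getD_eq_getElem _ _ hi]
    exact hu _ (List.getElem_mem hi)
  calc ∑ d ∈ range g, nu u [d] = ∑ d ∈ range g, #{i ∈ range u.length | u.getD i 0 = d} :=
        sum_congr rfl fun d _ => congrArg card <| filter_congr fun i hi =>
          singleton_prefix_iff d i (mem_range.1 hi)
    _ = u.length := by rw [← card_eq_sum_card_fiberwise hmaps, card_range]

end Occurrences

section Concatenation

/-- The concatenation of the first `M` words of the sequence `w`. -/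
def concatWords (w : ℕ → List ℕ) (M : ℕ) : List ℕ :=
  ((List.range M).map w).flatten

/-- The number of occurrences of `σ` in the first `M` words of `w` that lie inside a single word;
these differ from the occurrences in `concatWords w M` by those straddling a junction. -/
def innerNu (w : ℕ → List ℕ) (σ : List ℕ) (M : ℕ) : ℕ :=
  ∑ n ∈ range M, nu (w n) σ

variable (w : ℕ → List ℕ)

lemma concatWords_succ (M : ℕ) : concatWords w (M + 1) = concatWords w M ++ w M := by
  simp [concatWords, List.range_succ]

lemma innerNu_succ (σ : List ℕ) (M : ℕ) :
    innerNu w σ (M + 1) = innerNu w σ M + nu (w M) σ :=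
  sum_range_succ _ _

lemma length_concatWords_succ (M : ℕ) :
    (concatWords w (M + 1)).length = (concatWords w M).length + (w M).length := by
  rw [concatWords_succ, List.length_append]

lemma length_concatWords (M : ℕ) :
    (concatWords w M).length = ∑ n ∈ range M, (w n).length := by
  induction M with
  | zero => rfl
  | succ M ih => rw [length_concatWords_succ, ih, sum_range_succ]

lemma concatWords_prefix {M M' : ℕ} (h : M ≤ M') : concatWords w M <+: concatWords w M' := by
  induction M', h using Nat.le_induction with
  | base => exact List.prefix_rfl
  | succ n _ ih => exact concatWords_succ w n ▸ ih.trans (List.prefix_append _ _)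

lemma innerNu_le_nu_concatWords (σ : List ℕ) (M : ℕ) :
    innerNu w σ M ≤ nu (concatWords w M) σ := by
  induction M with
  | zero => exact Nat.zero_le _
  | succ M ih =>
    rw [concatWords_succ, innerNu_succ]
    exact (Nat.add_le_add_right ih _).trans (nu_add_nu_le_nu_append _ _ σ)

lemma nu_concatWords_le (σ : List ℕ) (M : ℕ) :
    nu (concatWords w M) σ ≤ innerNu w σ M + M * σ.length := by
  induction M with
  | zero => simp [concatWords, nu]
  | succ M ih =>
    rw [concatWords_succ, innerNu_succ, add_one_mul]
    have := nu_append_le (concatWords w M) (w M) σ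
    lia

variable {w} {x : ℕ → ℕ}

lemma nu_map_range_mem_Icc {σ : List ℕ} {M N : ℕ}
    (hx : ∀ M, concatWords w M = (List.range (concatWords w M).length).map x)
    (hM : (concatWords w M).length ≤ N) (hN : N ≤ (concatWords w (M + 1)).length) :
    nu ((List.range N).map x) σ ∈ Set.Icc (innerNu w σ M)
      (innerNu w σ M + (w M).length + M * σ.length + σ.length) := by
  have range_prefix {a b : ℕ} (h : a ≤ b) : (List.range a).map x <+: (List.range b).map x :=
    (List.prefix_iff_eq_take.2 <| by simp [List.take_range, h]).map x
  constructor
  · calc innerNu w σ M ≤ nu (concatWords w M) σ := innerNu_le_nu_concatWords w σ M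
      _ ≤ nu ((List.range N).map x) σ := nu_le_nu_of_prefix σ (hx M ▸ range_prefix hM)
  · calc nu ((List.range N).map x) σ ≤ nu (concatWords w M ++ w M) σ :=
          nu_le_nu_of_prefix σ (concatWords_succ w M ▸ hx (M + 1) ▸ range_prefix hN)
      _ ≤ nu (concatWords w M) σ + nu (w M) σ + σ.length := nu_append_le _ _ _
      _ ≤ innerNu w σ M + (w M).length + M * σ.length + σ.length := by
        have := nu_concatWords_le w σ M
        have := nu_le_length (w M) σ
        lia

lemma exists_tendsto_atTop_le_lt {L : ℕ → ℕ} (hzero : L 0 = 0) (hmono : Monotone L)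
    (htop : Tendsto L atTop atTop) :
    ∃ φ : ℕ → ℕ, Tendsto φ atTop atTop ∧ ∀ N, L (φ N) ≤ N ∧ N < L (φ N + 1) := by
  have exceeds (N : ℕ) : ∃ M, N < L (M + 1) :=
    (((tendsto_add_atTop_iff_nat 1).2 htop).eventually_gt_atTop N).exists
  refine ⟨fun N => Nat.find (exceeds N), tendsto_atTop.2 fun b => ?_, fun N => ⟨?_, ?_⟩⟩
  · filter_upwards [eventually_ge_atTop (L b)] with N hN
    rw [Nat.le_find_iff]
    exact fun M hM => not_lt.2 ((hmono hM).trans hN)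
  · change L (Nat.find (exceeds N)) ≤ N
    rcases h : Nat.find (exceeds N) with _ | M
    · simp [hzero]
    · exact not_lt.1 (Nat.find_min (exceeds N) (by lia))
  · exact Nat.find_spec (exceeds N)

lemma tendsto_div_length_concatWords_succ {f : ℕ → ℝ} {c : ℝ}
    (htop : Tendsto (fun M => (concatWords w M).length) atTop atTop)
    (hlast : Tendsto (fun M => ((w M).length : ℝ) / (concatWords w M).length) atTop (𝓝 0))
    (hf : Tendsto (fun M => f M / (concatWords w M).length) atTop (𝓝 c)) :
    Tendsto (fun M => f M / (concatWords w (M + 1)).length) atTop (𝓝 c) := by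
  have hratio := hf.div (hlast.const_add 1) (by simp)
  rw [add_zero, div_one] at hratio
  refine hratio.congr' ?_
  filter_upwards [htop.eventually_gt_atTop 0] with M hM
  rw [Pi.div_apply, length_concatWords_succ]
  push_cast
  field_simp

theorem tendsto_nu_div_of_concatWords {σ : List ℕ} {c : ℝ}
    (hx : ∀ M, concatWords w M = (List.range (concatWords w M).length).map x)
    (htop : Tendsto (fun M => (concatWords w M).length) atTop atTop)
    (hcount : Tendsto (fun M : ℕ => (M : ℝ) / (concatWords w M).length) atTop (𝓝 0))
    (hlast : Tendsto (fun M => ((w M).length : ℝ) / (concatWords w M).length) atTop (𝓝 0))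
    (hfreq : Tendsto (fun M => (innerNu w σ M : ℝ) / (concatWords w M).length) atTop (𝓝 c)) :
    Tendsto (fun N : ℕ => (nu ((List.range N).map x) σ : ℝ) / N) atTop (𝓝 c) := by
  have hLtop : Tendsto (fun M => ((concatWords w M).length : ℝ)) atTop atTop :=
    tendsto_natCast_atTop_atTop.comp htop
  have hLpos : ∀ᶠ M in atTop, (0 : ℝ) < (concatWords w M).length := hLtop.eventually_gt_atTop 0
  have hlower := tendsto_div_length_concatWords_succ htop hlast hfreq
  have hupper : Tendsto (fun M : ℕ =>
      ((innerNu w σ M + (w M).length + M * σ.length + σ.length : ℕ) : ℝ) /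
        (concatWords w M).length) atTop (𝓝 c) := by
    have hsum := ((hfreq.add hlast).add (hcount.mul_const (σ.length : ℝ))).add
      (hLtop.const_div_atTop (σ.length : ℝ))
    simp only [zero_mul, add_zero] at hsum
    refine hsum.congr fun M => ?_
    push_cast
    ring
  obtain ⟨φ, hφtop, hφ⟩ := exists_tendsto_atTop_le_lt (L := fun M => (concatWords w M).length)
    rfl (fun a b h => (concatWords_prefix w h).length_le) htop
  have hν (N : ℕ) := nu_map_range_mem_Icc (σ := σ) hx (hφ N).1 (hφ N).2.le
  refine tendsto_of_tendsto_of_tendsto_of_le_of_le' (hlower.comp hφtop) (hupper.comp hφtop) ?_ ?_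
  · filter_upwards [eventually_gt_atTop 0] with N hN
    rw [Function.comp_apply]
    gcongr
    exacts [(hν N).1, (hφ N).2.le]
  · filter_upwards [hφtop.eventually hLpos] with N hN
    rw [Function.comp_apply]
    gcongr
    exacts [(hν N).2, (hφ N).1]

end Concatenation

section ConcatenatedIntegers

variable {g : ℕ} {a : ℕ → ℕ}

/-- The base-`g` digit strings of the terms of `a`. -/
def digitWords (g : ℕ) (a : ℕ → ℕ) (n : ℕ) : List ℕ :=
  digs g (a n)

lemma le_length_concatWords_digitWords (hpos : ∀ n, n ≠ 0 → a n ≠ 0) (N : ℕ) :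
    N ≤ (concatWords (digitWords g a) (N + 1)).length := by
  induction N with
  | zero => exact Nat.zero_le _
  | succ N ih =>
    have : digs g (a (N + 1)) ≠ [] := by
      simpa [digs, Nat.digits_eq_nil_iff_eq_zero] using hpos (N + 1) N.succ_ne_zero
    have : 0 < (digitWords g a (N + 1)).length := List.length_pos_iff.2 this
    rw [length_concatWords_succ]
    lia

-- `concatDigit` starts with `a 1`; when `a 0 = 0`, the word of index `0` is empty.
lemma concatDigit_eq_getD (hzero : a 0 = 0) (N : ℕ) :
    concatDigit g a N = (concatWords (digitWords g a) (N + 2)).getD N 0 := by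
  rw [concatDigit, concatWords, List.range_succ_eq_map (n := N + 1)]
  simp [digitWords, digs, hzero, Function.comp_def]

lemma concatWords_digitWords (hzero : a 0 = 0) (hpos : ∀ n, n ≠ 0 → a n ≠ 0) (M : ℕ) :
    concatWords (digitWords g a) M =
      (List.range (concatWords (digitWords g a) M).length).map (concatDigit g a) := by
  refine List.ext_getElem (by simp) fun i hi _ => ?_
  have hi' : i < (concatWords (digitWords g a) (i + 2)).length :=
    le_length_concatWords_digitWords hpos (i + 1)
  rw [List.getElem_map, List.getElem_range, concatDigit_eq_getD hzero,
    List.getD_eq_getElem _ _ hi']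
  rcases le_total M (i + 2) with h | h
  · exact (concatWords_prefix _ h).getElem hi
  · exact ((concatWords_prefix _ h).getElem hi').symm

lemma sum_innerNu_digitWords_singleton (hg : 1 < g) (M : ℕ) :
    ∑ d ∈ range g, innerNu (digitWords g a) [d] M = (concatWords (digitWords g a) M).length := by
  simp only [innerNu, length_concatWords]
  rw [sum_comm]
  exact sum_congr rfl fun n _ => sum_nu_singleton fun d hd =>
    Nat.digits_lt_base hg (List.mem_reverse.1 hd)

theorem isNormalSeq_concatDigit (hg : 1 < g) (hzero : a 0 = 0) (hpos : ∀ n, n ≠ 0 → a n ≠ 0)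
    {S : ℕ → ℝ}
    (hcount : Tendsto (fun M : ℕ => M / S M) atTop (𝓝 0))
    (hlast : Tendsto (fun M => (digs g (a M)).length / S M) atTop (𝓝 0))
    (hfreq : ∀ σ : List ℕ, σ ≠ [] → (∀ d ∈ σ, d < g) →
      Tendsto (fun M => innerNu (digitWords g a) σ M / S M) atTop (𝓝 (1 / (g : ℝ) ^ σ.length))) :
    IsNormalSeq g (concatDigit g a) := by
  intro σ hσ hσg
  have hL : Tendsto (fun M => (concatWords (digitWords g a) M).length / S M) atTop (𝓝 1) := by
    have hdigits := tendsto_finsetSum (range g) fun d hd =>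
      hfreq [d] (by simp) (by simpa using mem_range.1 hd)
    have hone : ∑ d ∈ range g, 1 / (g : ℝ) ^ [d].length = 1 := by
      simp [show (g : ℝ) ≠ 0 by positivity]
    rw [hone] at hdigits
    refine hdigits.congr fun M => ?_
    rw [← sum_div, ← sum_innerNu_digitWords_singleton hg, Nat.cast_sum]
  have rescale {f : ℕ → ℝ} {c : ℝ} (hf : Tendsto (fun M => f M / S M) atTop (𝓝 c)) :
      Tendsto (fun M => f M / (concatWords (digitWords g a) M).length) atTop (𝓝 c) := by
    rw [← div_one c]
    refine (hf.div hL one_ne_zero).congr' ?_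
    filter_upwards [hL.eventually_ne one_ne_zero] with M hM
    exact div_div_div_cancel_right₀ (by rintro h; simp [h] at hM) _ _
  have htop : Tendsto (fun M => (concatWords (digitWords g a) M).length) atTop atTop :=
    (tendsto_add_atTop_iff_nat 1).1 <|
      tendsto_atTop_mono (le_length_concatWords_digitWords hpos) tendsto_id
  exact tendsto_nu_div_of_concatWords (concatWords_digitWords hzero hpos) htop (rescale hcount)
    (rescale hlast) (rescale (hfreq σ hσ hσg))

end ConcatenatedIntegers

section Averages

variable {α ι : Type*}

lemma tendsto_average_of_card_exceptional_le {l : Filter α} {s : α → Finset ι} {c : α → ι → ℝ}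
    {L C : ℝ} (hs : Tendsto (fun a => #(s a)) l atTop)
    (hbdd : ∀ a, ∀ i ∈ s a, |c a i - L| ≤ C)
    (hexc : ∀ η > 0, ∃ B : ℕ, ∀ᶠ a in l, #{i ∈ s a | η < |c a i - L|} ≤ B) :
    Tendsto (fun a => (∑ i ∈ s a, c a i) / #(s a)) l (𝓝 L) := by
  have hcard : Tendsto (fun a => (#(s a) : ℝ)) l atTop := tendsto_natCast_atTop_atTop.comp hs
  rw [Metric.tendsto_nhds]
  intro ε hε
  obtain ⟨B, hB⟩ := hexc (ε / 2) (half_pos hε)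
  filter_upwards [hB, hcard.eventually_gt_atTop 0, hcard.eventually_gt_atTop (2 * (B * |C|) / ε)]
    with a hB hpos hlarge
  rw [div_lt_iff₀ hε] at hlarge
  have hterm : ∀ i ∈ s a, |c a i - L| ≤ ε / 2 + if ε / 2 < |c a i - L| then |C| else 0 := by
    intro i hi
    split_ifs with h
    · linarith [hbdd a i hi, le_abs_self C]
    · linarith
  have hdiff : (∑ i ∈ s a, c a i) / #(s a) - L = (∑ i ∈ s a, (c a i - L)) / #(s a) := by
    rw [sum_sub_distrib, sum_const, nsmul_eq_mul]
    field_simp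
  rw [Real.dist_eq, hdiff, abs_div, Nat.abs_cast, div_lt_iff₀ hpos]
  calc |∑ i ∈ s a, (c a i - L)| ≤ ∑ i ∈ s a, |c a i - L| := abs_sum_le_sum_abs _ _
    _ ≤ ∑ i ∈ s a, (ε / 2 + if ε / 2 < |c a i - L| then |C| else 0) := sum_le_sum hterm
    _ = #(s a) * (ε / 2) + #{i ∈ s a | ε / 2 < |c a i - L|} * |C| := by
      rw [sum_add_distrib, ← sum_filter, sum_const, sum_const, nsmul_eq_mul, nsmul_eq_mul]
    _ ≤ #(s a) * (ε / 2) + B * |C| := by gcongr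
    _ < ε * #(s a) := by linarith

lemma abs_sub_le_of_forall_le_of_sum_eq {s : Finset ι} {c : ι → ℝ} {A δ : ℝ}
    (hle : ∀ i ∈ s, c i ≤ A + δ) (hsum : ∑ i ∈ s, c i = #s * A) {i : ι} (hi : i ∈ s) :
    |c i - A| ≤ #s * δ := by
  have hnonneg : ∀ j ∈ s, 0 ≤ A + δ - c j := fun j hj => sub_nonneg.2 (hle j hj)
  have htotal : ∑ j ∈ s, (A + δ - c j) = #s * δ := by
    rw [sum_sub_distrib, hsum, sum_const, nsmul_eq_mul]
    ring
  have hcard : (1 : ℝ) ≤ #s := by exact_mod_cast card_pos.2 ⟨i, hi⟩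
  have hδ : 0 ≤ δ := nonneg_of_mul_nonneg_right (htotal ▸ sum_nonneg hnonneg) (by linarith)
  have hslack : A + δ - c i ≤ #s * δ := htotal ▸ single_le_sum hnonneg hi
  have hδ_le : δ ≤ #s * δ := le_mul_of_one_le_left hδ hcard
  exact abs_le.2 ⟨by linarith, by linarith [hle i hi]⟩

end Averages

section Congruences

lemma card_filter_modEq_Ico_add_mul {d : ℕ} (hd : 0 < d) (u t v : ℕ) :
    #{b ∈ Ico u (u + d * t) | b ≡ v [MOD d]} = t := by
  have hshift : ((u + d * t : ℕ) - v : ℚ) / d = (u - v) / d + t := by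
    push_cast
    field_simp
    ring
  have := Nat.Ico_filter_modEq_card u (u + d * t) hd v
  rw [hshift, Int.ceil_add_natCast] at this
  lia

variable {Q : ℕ}

lemma card_filter_linear_mod_eq_le (hQ : 0 < Q) (x y r : ℕ) :
    #{b ∈ range Q | (x + y * b) % Q = r} ≤ y.gcd Q := by
  rcases eq_empty_or_nonempty {b ∈ range Q | (x + y * b) % Q = r} with hempty | ⟨b₀, hb₀⟩
  · simp [hempty]
  have hdvd : y.gcd Q ∣ Q := y.gcd_dvd_right Q
  have hstep : 0 < Q / y.gcd Q :=
    Nat.div_pos (Nat.le_of_dvd hQ hdvd) (Nat.gcd_pos_of_pos_right _ hQ)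
  rw [← card_filter_modEq_Ico_add_mul hstep 0 (y.gcd Q) b₀, zero_add, Nat.div_mul_cancel hdvd]
  refine card_le_card fun b hb => ?_
  simp only [mem_filter, mem_range, mem_Ico] at hb hb₀ ⊢
  refine ⟨⟨b.zero_le, hb.1⟩, ?_⟩
  rw [Nat.gcd_comm]
  exact Nat.ModEq.cancel_left_div_gcd hQ
    (Nat.ModEq.add_left_cancel' x (hb.2.trans hb₀.2.symm : x + y * b ≡ x + y * b₀ [MOD Q]))

lemma card_filter_linear_mod_mem_Ico_le (hQ : 0 < Q) (x y z l : ℕ) :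
    #{b ∈ range Q | (x + y * b) % Q ∈ Ico z (z + l)} ≤ l + y.gcd Q := by
  set c := y.gcd Q
  have hc : 0 < c := Nat.gcd_pos_of_pos_right _ hQ
  have himage : image (fun b => (x + y * b) % Q) {b ∈ range Q | (x + y * b) % Q ∈ Ico z (z + l)} ⊆
      {r ∈ Ico z (z + c * (l / c + 1)) | r ≡ x [MOD c]} := by
    intro r hr
    obtain ⟨b, hb, rfl⟩ := mem_image.1 hr
    simp only [mem_filter, mem_Ico] at hb ⊢
    have := Nat.lt_mul_div_succ l hc
    refine ⟨by lia, ((Nat.mod_modEq _ _).of_dvd (y.gcd_dvd_right Q)).trans ?_⟩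
    simpa using ((Nat.modEq_zero_iff_dvd.2 ((y.gcd_dvd_left Q).mul_right b)).add_left x)
  calc #{b ∈ range Q | (x + y * b) % Q ∈ Ico z (z + l)}
      ≤ c * #(image (fun b => (x + y * b) % Q) {b ∈ range Q | (x + y * b) % Q ∈ Ico z (z + l)}) :=
        card_le_mul_card_image _ _ fun r _ =>
          (card_le_card (filter_subset_filter _ (filter_subset _ _))).trans
            (card_filter_linear_mod_eq_le hQ x y r)
    _ ≤ c * (l / c + 1) := by
        gcongr
        exact (card_le_card himage).trans_eq (card_filter_modEq_Ico_add_mul hc _ _ _)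
    _ ≤ l + c := by
        rw [mul_add_one]
        gcongr
        exact Nat.mul_div_le l c

lemma card_divisors_le_two_mul_succ_sqrt (n : ℕ) : #n.divisors ≤ 2 * (n.sqrt + 1) := by
  have small_or_complementary : n.divisors ⊆
      range (n.sqrt + 1) ∪ (range (n.sqrt + 1)).image fun d => n / d := by
    intro d hd
    obtain ⟨hdvd, hn⟩ := Nat.mem_divisors.1 hd
    simp only [mem_union, mem_range, mem_image]
    refine or_iff_not_imp_left.2 fun hlarge => ⟨n / d, ?_, Nat.div_div_self hdvd hn⟩
    rw [Nat.div_lt_iff_lt_mul (Nat.pos_of_mem_divisors hd)]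
    exact (Nat.lt_succ_sqrt n).trans_le (Nat.mul_le_mul_left _ (not_lt.1 hlarge))
  calc #n.divisors ≤ #(range (n.sqrt + 1)) + #((range (n.sqrt + 1)).image fun d => n / d) :=
        (card_le_card small_or_complementary).trans (card_union_le _ _)
    _ ≤ #(range (n.sqrt + 1)) + #(range (n.sqrt + 1)) := 
        Nat.add_le_add_left card_image_le _
    _ = 2 * (n.sqrt + 1) := by rw [card_range, two_mul]

lemma card_divisors_mul_self_le {n : ℕ} (hn : 0 < n) : #(n * n).divisors ≤ 4 * n := by
  have := card_divisors_le_two_mul_succ_sqrt (n * n)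
  rw [Nat.sqrt_eq] at this
  lia

lemma mul_card_filter_dvd_le {d : ℕ} (hd : 0 < d) (M : ℕ) :
    d * #{n ∈ range M | d ∣ n} ≤ M + d := by
  have hsub : {n ∈ range M | d ∣ n} ⊆ {n ∈ Ico 0 (0 + d * (M / d + 1)) | n ≡ 0 [MOD d]} := by
    intro n hn
    simp only [mem_filter, mem_range, mem_Ico, Nat.modEq_zero_iff_dvd] at hn ⊢
    have := Nat.lt_mul_div_succ M hd
    exact ⟨by lia, hn.2⟩
  calc d * #{n ∈ range M | d ∣ n} ≤ d * (M / d + 1) := by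
        gcongr
        exact (card_le_card hsub).trans_eq (card_filter_modEq_Ico_add_mul hd _ _ _)
    _ ≤ M + d := by
        rw [mul_add_one]
        gcongr
        exact Nat.mul_div_le M d

lemma sum_gcd_le (hQ : 0 < Q) (M : ℕ) : ∑ n ∈ range M, n.gcd Q ≤ #Q.divisors * (M + Q) := by
  have hgcd (n : ℕ) : n.gcd Q ≤ ∑ d ∈ Q.divisors, if d ∣ n then d else 0 := by
    refine le_trans ?_ (single_le_sum (fun _ _ => Nat.zero_le _)
      (Nat.mem_divisors.2 ⟨n.gcd_dvd_right Q, hQ.ne'⟩))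
    rw [if_pos (n.gcd_dvd_left Q)]
  calc ∑ n ∈ range M, n.gcd Q ≤ ∑ n ∈ range M, ∑ d ∈ Q.divisors, (if d ∣ n then d else 0) :=
        sum_le_sum fun n _ => hgcd n
    _ = ∑ d ∈ Q.divisors, d * #{n ∈ range M | d ∣ n} := by
        rw [sum_comm]
        simp only [← sum_filter, sum_const, smul_eq_mul, mul_comm]
    _ ≤ ∑ _ ∈ Q.divisors, (M + Q) := sum_le_sum fun _ hd =>
        (mul_card_filter_dvd_le (Nat.pos_of_mem_divisors hd) M).trans
          (Nat.add_le_add_left (Nat.divisor_le hd) M)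
    _ = #Q.divisors * (M + Q) := by rw [sum_const, smul_eq_mul]

lemma gcd_mul_left_le_mul_gcd (hQ : 0 < Q) {m : ℕ} (hm : 0 < m) (n : ℕ) :
    (m * n).gcd Q ≤ m * n.gcd Q :=
  (Nat.le_of_dvd (Nat.mul_pos (Nat.gcd_pos_of_pos_right _ hQ) (Nat.gcd_pos_of_pos_right _ hQ))
    (Nat.gcd_mul_left_dvd_mul_gcd _ _ _)).trans (Nat.mul_le_mul_right _ (Nat.gcd_le_left _ hm))

end Congruences

section ResidueCount

/-- The number of `n < M` for which `⌊f n / q⌋` lies in the residue class `s` modulo `K`. With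
`q = g ^ i` and `K = g ^ k` this reads off the `k` base-`g` digits of `f n` starting at position
`i` (counted from the least significant digit). -/
def divModCount (f : ℕ → ℕ) (q K s M : ℕ) : ℕ :=
  #{n ∈ range M | f n / q % K = s}

lemma sum_divModCount (f : ℕ → ℕ) (q : ℕ) {K : ℕ} (hK : 0 < K) (M : ℕ) :
    ∑ s ∈ range K, divModCount f q K s M = M := by
  simp only [divModCount]
  rw [← card_eq_sum_card_fiberwise fun n _ => mem_coe.2 (mem_range.2 (Nat.mod_lt _ hK)), card_range]

lemma card_filter_range_le_add (p : ℕ → Prop) [DecidablePred p] (M c : ℕ) :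
    #{n ∈ range M | p n} ≤ #{n ∈ range M | p (n + c)} + c := by
  simp only [← Nat.count_eq_card_filter_range]
  calc M.count p ≤ (M + c).count p := Nat.count_monotone p (Nat.le_add_right M c)
    _ = M.count (fun n => p (n + c)) + c.count p := Nat.count_add' p M c
    _ ≤ M.count (fun n => p (n + c)) + c := Nat.add_le_add_left (Nat.count_le p) _

-- As `Q' * K ∣ P`, shifting `n` by `b * P` acts linearly on `⌊n ^ 2 / P⌋` modulo `Q' * K`.
lemma card_filter_sq_add_mul_div_mod_eq_le {P Q' K : ℕ} (hP : 0 < P) (hQ' : 0 < Q') (hK : 0 < K)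
    (hdvd : Q' * K ∣ P) (s n : ℕ) :
    #{b ∈ range (Q' * K) | (n + b * P) ^ 2 / (P * Q') % K = s} ≤ Q' + 2 * n.gcd (Q' * K) := by
  set Q := Q' * K with hQ
  have hQpos : 0 < Q := Nat.mul_pos hQ' hK
  have hshift (b : ℕ) : (n + b * P) ^ 2 / (P * Q') % K = (n ^ 2 / P + 2 * n * b) % Q / Q' := by
    obtain ⟨e, he⟩ := hdvd
    have hsq : (n + b * P) ^ 2 = n ^ 2 + P * (2 * n * b + Q * (e * b ^ 2)) := by
      rw [he]
      ring
    rw [← Nat.div_div_eq_div_mul, ← Nat.mod_mul_right_div_self, hsq, Nat.add_mul_div_left _ _ hP,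
      ← add_assoc, ← hQ, Nat.add_mul_mod_self_left]
  refine (card_le_card fun b hb => ?_).trans ((card_filter_linear_mod_mem_Ico_le hQpos
    (n ^ 2 / P) (2 * n) (s * Q') Q').trans
      (Nat.add_le_add_left (gcd_mul_left_le_mul_gcd hQpos two_pos n) Q'))
  rw [mem_filter, hshift, Nat.div_eq_iff hQ'] at hb
  rw [mem_filter, mem_Ico]
  exact ⟨hb.1, hb.2.1, by lia⟩

lemma mul_divModCount_sq_le {P Q' K : ℕ} (hP : 0 < P) (hQ' : 0 < Q') (hK : 0 < K)
    (hdvd : Q' * K ∣ P) (s M : ℕ) :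
    Q' * K * divModCount (· ^ 2) (P * Q') K s M ≤
      M * Q' + 2 * (#(Q' * K).divisors * (M + Q' * K)) + Q' * K * (P * (Q' * K)) := by
  set Q := Q' * K
  have hcount : ∀ b ∈ range Q, divModCount (· ^ 2) (P * Q') K s M ≤
      #{n ∈ range M | (n + b * P) ^ 2 / (P * Q') % K = s} + P * Q := by
    intro b hb
    refine (card_filter_range_le_add _ M (b * P)).trans (Nat.add_le_add_left ?_ _)
    rw [mul_comm P]
    exact Nat.mul_le_mul_right P (mem_range.1 hb).le
  calc Q * divModCount (· ^ 2) (P * Q') K s M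
      = ∑ _ ∈ range Q, divModCount (· ^ 2) (P * Q') K s M := by simp
    _ ≤ ∑ b ∈ range Q, (#{n ∈ range M | (n + b * P) ^ 2 / (P * Q') % K = s} + P * Q) :=
        sum_le_sum hcount
    _ = ∑ n ∈ range M, #{b ∈ range Q | (n + b * P) ^ 2 / (P * Q') % K = s} + Q * (P * Q) := by
        simp only [sum_add_distrib, card_filter, sum_const, card_range, smul_eq_mul]
        rw [sum_comm]
    _ ≤ ∑ n ∈ range M, (Q' + 2 * n.gcd Q) + Q * (P * Q) :=
        Nat.add_le_add_right (sum_le_sum fun n _ =>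
          card_filter_sq_add_mul_div_mod_eq_le hP hQ' hK hdvd s n) _
    _ = M * Q' + 2 * ∑ n ∈ range M, n.gcd Q + Q * (P * Q) := by
        rw [sum_add_distrib, sum_const, card_range, smul_eq_mul, mul_sum]
    _ ≤ M * Q' + 2 * (#Q.divisors * (M + Q)) + Q * (P * Q) := by
        gcongr
        exact sum_gcd_le (Nat.mul_pos hQ' hK) M

variable {f : ℕ → ℕ} {q K : ℕ}

lemma div_eq_iff_mem_Ico (hq : 0 < q) {m w : ℕ} : m / q = w ↔ m ∈ Ico (w * q) (w * q + q) := by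
  rw [Nat.div_eq_iff hq, mem_Ico]
  lia

lemma exists_Ioc_subset_filter_div_eq (hmono : Monotone f) (hzero : f 0 = 0)
    (hconv : ∀ a b t, a ≤ b → f (a + t) + f b ≤ f (b + t) + f a)
    (hq : 0 < q) {M u v a t : ℕ} (huv : u < v) (ha : v * q ≤ f a) (hat : f (a + t) < v * q + q)
    (hM : a + t < M) :
    ∃ y, Ioc y (y + t) ⊆ {n ∈ range M | f n / q = u} := by
  have huv' : u * q + q ≤ v * q := by
    rw [← add_one_mul]
    exact Nat.mul_le_mul_right q huv
  have hexceeds : ∃ y, u * q < f y := ⟨a, by lia⟩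
  obtain ⟨y, hy⟩ : ∃ y, Nat.find hexceeds = y + 1 :=
    Nat.exists_eq_succ_of_ne_zero fun h => by simpa [h, hzero] using Nat.find_spec hexceeds
  have hya : y + 1 ≤ a := hy ▸ Nat.find_min' hexceeds (by lia)
  have hfy : f y ≤ u * q := not_lt.1 (Nat.find_min hexceeds (by lia))
  have hfy' : u * q < f (y + 1) := hy ▸ Nat.find_spec hexceeds
  refine ⟨y, fun n hn => ?_⟩
  rw [mem_Ioc] at hn
  have hlow : f (y + 1) ≤ f n := hmono hn.1
  have hhigh : f n ≤ f (y + t) := hmono hn.2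
  have := hconv y a t (by lia)
  exact mem_filter.2 ⟨mem_range.2 (by lia), (div_eq_iff_mem_Ico hq).2 (mem_Ico.2 (by lia))⟩

-- By convexity, `f` spends in `[u * q, (u + 1) * q)` at least the time it spends, at higher
-- speed, in `[v * q, (v + 1) * q)`, up to one unit.
lemma card_filter_div_eq_le_of_convex (hmono : Monotone f) (hzero : f 0 = 0)
    (hconv : ∀ a b t, a ≤ b → f (a + t) + f b ≤ f (b + t) + f a)
    (hq : 0 < q) (M : ℕ) {u v : ℕ} (huv : u < v) :
    #{n ∈ range M | f n / q = v} ≤ #{n ∈ range M | f n / q = u} + 1 := by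
  set S : Finset ℕ := {n ∈ range M | f n / q = v}
  rcases S.eq_empty_or_nonempty with hempty | hne
  · simp [hempty]
  obtain ⟨t, ht⟩ := Nat.exists_eq_add_of_le (S.min'_le_max' hne)
  set a := S.min' hne
  have mem_S {n : ℕ} (hn : n ∈ S) : n < M ∧ v * q ≤ f n ∧ f n < v * q + q := by
    rw [mem_filter, mem_range, div_eq_iff_mem_Ico hq, mem_Ico] at hn
    exact hn
  have hfirst := mem_S (S.min'_mem hne)
  have hlast := mem_S (ht ▸ S.max'_mem hne)
  obtain ⟨y, hy⟩ := exists_Ioc_subset_filter_div_eq hmono hzero hconv hq huv hfirst.2.1 hlast.2.2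
    hlast.1
  have hS : S ⊆ Icc a (a + t) := fun n hn => mem_Icc.2 ⟨S.min'_le n hn, ht ▸ S.le_max' n hn⟩
  calc #S ≤ #(Icc a (a + t)) := card_le_card hS
    _ = #(Ioc y (y + t)) + 1 := by
        rw [Nat.card_Icc, Nat.card_Ioc]
        lia
    _ ≤ #{n ∈ range M | f n / q = u} + 1 := Nat.add_le_add_right (card_le_card hy) 1

lemma divModCount_eq_sum {s A M : ℕ} (hs : s < K) (hA : ∀ n < M, f n / q < A) :
    divModCount f q K s M = ∑ a ∈ range A, #{n ∈ range M | f n / q = K * a + s} := by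
  have hmaps : ∀ n ∈ {n ∈ range M | f n / q % K = s}, f n / q / K ∈ range A := by
    intro n hn
    exact mem_range.2 ((Nat.div_le_self _ _).trans_lt
      (hA n (mem_range.1 (mem_filter.1 hn).1)))
  have hdigit (m a : ℕ) : m % K = s ∧ m / K = a ↔ m = K * a + s := by
    rw [and_comm, Nat.div_mod_unique (by lia)]
    lia
  rw [divModCount, card_eq_sum_card_fiberwise hmaps]
  simp only [filter_filter, hdigit]

lemma divModCount_le_add_of_convex (hmono : Monotone f) (hzero : f 0 = 0)
    (hconv : ∀ a b t, a ≤ b → f (a + t) + f b ≤ f (b + t) + f a)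
    (hq : 0 < q) {s s' : ℕ} (hs : s < K) (hs' : s' < K) (M : ℕ) :
    divModCount f q K s M ≤
      divModCount f q K s' M + (f M / q + #{n ∈ range M | f n / q = 0} + 2) := by
  set c : ℕ → ℕ := fun v => #{n ∈ range M | f n / q = v}
  have hanti {u v : ℕ} (h : u < v) : c v ≤ c u + 1 :=
    card_filter_div_eq_le_of_convex hmono hzero hconv hq M h
  have hfirst : c (K * 0 + s) ≤ c 0 + 1 := by
    rcases Nat.eq_zero_or_pos (K * 0 + s) with h | h
    · rw [h]
      exact Nat.le_succ _
    · exact hanti h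
  have hA {n : ℕ} (hn : n < M) : f n / q < f M / q + 1 :=
    Nat.lt_succ_of_le (Nat.div_le_div_right (hmono hn.le))
  calc divModCount f q K s M = ∑ a ∈ range (f M / q + 1 + 1), c (K * a + s) :=
        divModCount_eq_sum hs fun n hn => (hA hn).trans (Nat.lt_succ_self _)
    _ = ∑ a ∈ range (f M / q + 1), c (K * (a + 1) + s) + c (K * 0 + s) := sum_range_succ' _ _
    _ ≤ ∑ a ∈ range (f M / q + 1), (c (K * a + s') + 1) + (c 0 + 1) :=
        Nat.add_le_add (sum_le_sum fun a _ => hanti (by rw [mul_add_one]; lia)) hfirst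
    _ = divModCount f q K s' M + (f M / q + c 0 + 2) := by
        rw [divModCount_eq_sum hs' fun n hn => hA hn, sum_add_distrib, sum_const, card_range,
          smul_eq_mul]
        lia

lemma mul_divModCount_le_of_convex (hmono : Monotone f) (hzero : f 0 = 0)
    (hconv : ∀ a b t, a ≤ b → f (a + t) + f b ≤ f (b + t) + f a)
    (hq : 0 < q) {s : ℕ} (hs : s < K) (M : ℕ) :
    K * divModCount f q K s M ≤ M + K * (f M / q + #{n ∈ range M | f n / q = 0} + 2) := by
  calc K * divModCount f q K s M = ∑ _ ∈ range K, divModCount f q K s M := by simp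
    _ ≤ ∑ s' ∈ range K,
          (divModCount f q K s' M + (f M / q + #{n ∈ range M | f n / q = 0} + 2)) :=
        sum_le_sum fun s' hs' =>
          divModCount_le_add_of_convex hmono hzero hconv hq hs (mem_range.1 hs') M
    _ = M + K * (f M / q + #{n ∈ range M | f n / q = 0} + 2) := by
        rw [sum_add_distrib, sum_divModCount f q (by lia), sum_const, card_range, smul_eq_mul]

lemma card_filter_sq_lt_le (M q : ℕ) : #{n ∈ range M | n ^ 2 < q} ≤ q.sqrt + 1 := by
  rw [← card_range (q.sqrt + 1)]
  refine card_le_card fun n hn => mem_range.2 (Nat.lt_succ_of_le (Nat.le_sqrt'.2 ?_))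
  exact (mem_filter.1 hn).2.le

lemma mul_divModCount_sq_le_of_lt (hq : 0 < q) {s : ℕ} (hs : s < K) (M : ℕ) :
    K * divModCount (· ^ 2) q K s M ≤ M + K * (M ^ 2 / q + q.sqrt + 3) := by
  have hconv (a b t : ℕ) (hab : a ≤ b) : (a + t) ^ 2 + b ^ 2 ≤ (b + t) ^ 2 + a ^ 2 := by
    nlinarith [Nat.mul_le_mul_right t hab]
  have hfirst : #{n ∈ range M | n ^ 2 / q = 0} ≤ q.sqrt + 1 := by
    simpa only [Nat.div_eq_zero_iff, hq.ne', false_or] using card_filter_sq_lt_le M q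
  refine (mul_divModCount_le_of_convex (pow_left_mono 2) (zero_pow two_ne_zero) hconv hq hs
    M).trans ?_
  exact Nat.add_le_add_left (Nat.mul_le_mul_left K (by lia)) M

end ResidueCount

section DigitBlocks

variable {g : ℕ} {σ : List ℕ}

lemma prefix_drop_digs_iff (hg : 1 < g) (hσg : ∀ d ∈ σ, d < g) {a p i : ℕ}
    (hlen : p + i + σ.length = (Nat.digits g a).length) :
    σ <+: (digs g a).drop p ↔ a / g ^ i % g ^ σ.length = Nat.ofDigits g σ.reverse := by
  set D := Nat.digits g a
  have hDg {l : ℕ} (hl : l ∈ D.drop i) : l < g :=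
    Nat.digits_lt_base hg (List.mem_of_mem_drop hl)
  have hblock : ((digs g a).drop p).take σ.length = ((D.drop i).take σ.length).reverse := by
    rw [digs, List.drop_reverse, List.take_reverse, List.drop_take, List.length_take]
    congr 3 <;> lia
  rw [List.prefix_iff_eq_take, hblock, ← List.reverse_eq_iff,
    Nat.self_div_pow_eq_ofDigits_drop i a hg,
    Nat.ofDigits_mod_pow_eq_ofDigits_take _ (by lia) _ fun _ => hDg, eq_comm]
  refine ⟨congrArg _, Nat.ofDigits_inj_of_len_eq hg ?_ (fun l hl => hDg (List.mem_of_mem_take hl))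
    fun l hl => hσg l (List.mem_reverse.1 hl)⟩
  rw [List.length_take, List.length_drop, List.length_reverse]
  lia

lemma nu_digs (hg : 1 < g) (hσ : σ ≠ []) (hσg : ∀ d ∈ σ, d < g) {a ℓ : ℕ}
    (hℓ : (digs g a).length ≤ ℓ) :
    nu (digs g a) σ = #{i ∈ range ℓ | g ^ (i + σ.length - 1) ≤ a ∧
      a / g ^ i % g ^ σ.length = Nat.ofDigits g σ.reverse} := by
  have hk : 0 < σ.length := List.length_pos_iff.2 hσ
  rw [digs, List.length_reverse] at hℓ
  have fits_iff (i : ℕ) : g ^ (i + σ.length - 1) ≤ a ↔ i + σ.length ≤ (Nat.digits g a).length := by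
    rw [← Nat.lt_digits_length_iff hg]
    lia
  have fits_of_prefix {p : ℕ} (hp : p < (digs g a).length) (h : σ <+: (digs g a).drop p) :
      p + σ.length ≤ (Nat.digits g a).length := by
    have := h.length_le
    rw [List.length_drop] at this
    rw [digs, List.length_reverse] at this hp
    lia
  let flip (p : ℕ) : ℕ := (Nat.digits g a).length - σ.length - p
  refine card_nbij' flip flip ?_ ?_ ?_ ?_ <;> intro p hp <;>
    simp only [coe_filter, mem_range, Set.mem_ofPred_eq, fits_iff] at hp ⊢
  · have := fits_of_prefix hp.1 hp.2
    exact ⟨by lia, by lia, (prefix_drop_digs_iff hg hσg (by lia)).1 hp.2⟩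
  · exact ⟨by rw [digs, List.length_reverse]; lia,
      (prefix_drop_digs_iff hg hσg (by lia)).2 hp.2.2⟩
  · have := fits_of_prefix hp.1 hp.2
    lia
  · lia

/-- The number of `n < M` such that `a n` has a digit at position `i + k - 1` (counted from the
least significant digit, which has position `0`) and its `k` digits at positions
`i, …, i + k - 1` spell the number `s`. -/
def digitBlockCount (g : ℕ) (a : ℕ → ℕ) (k s M i : ℕ) : ℕ :=
  #{n ∈ range M | g ^ (i + k - 1) ≤ a n ∧ a n / g ^ i % g ^ k = s}

lemma innerNu_digitWords (hg : 1 < g) (hσ : σ ≠ []) (hσg : ∀ d ∈ σ, d < g) {a : ℕ → ℕ} {M ℓ : ℕ}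
    (hℓ : ∀ n < M, (digs g (a n)).length ≤ ℓ) :
    innerNu (digitWords g a) σ M =
      ∑ i ∈ range ℓ, digitBlockCount g a σ.length (Nat.ofDigits g σ.reverse) M i := by
  simp only [innerNu, digitWords, digitBlockCount]
  rw [sum_congr rfl fun n hn => nu_digs hg hσ hσg (hℓ n (mem_range.1 hn))]
  simp only [card_filter]
  exact sum_comm

lemma digitBlockCount_le (g : ℕ) (a : ℕ → ℕ) (k s M i : ℕ) :
    digitBlockCount g a k s M i ≤ M :=
  (card_filter_le _ _).trans_eq (card_range M)

lemma digitBlockCount_le_divModCount (g : ℕ) (a : ℕ → ℕ) (k s M i : ℕ) :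
    digitBlockCount g a k s M i ≤ divModCount a (g ^ i) (g ^ k) s M :=
  card_le_card (monotone_filter_right _ fun _ _ h => h.2)

lemma divModCount_le_digitBlockCount_add (hg : 0 < g) (a : ℕ → ℕ) (k s M i : ℕ) :
    divModCount a (g ^ i) (g ^ k) s M ≤
      digitBlockCount g a k s M i + #{n ∈ range M | a n < g ^ (i + k)} := by
  refine (card_le_card fun n hn => ?_).trans (card_union_le _ _)
  have : g ^ (i + k - 1) ≤ g ^ (i + k) := Nat.pow_le_pow_right hg (Nat.sub_le _ _)
  simp only [mem_filter, mem_union] at hn ⊢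
  by_cases h : g ^ (i + k - 1) ≤ a n
  · exact .inl ⟨hn.1, h, hn.2⟩
  · exact .inr ⟨hn.1, by lia⟩

end DigitBlocks

section Squares

variable {g k e t M i s : ℕ}

lemma length_digs_sq_le (hg : 1 < g) {n : ℕ} (hn : n ≤ M) :
    (digs g (n ^ 2)).length ≤ 2 * Nat.log g M + 2 := by
  rw [digs, List.length_reverse, Nat.digits_length_le_iff hg, ← mul_add_one, mul_comm, pow_mul]
  exact Nat.pow_lt_pow_left (hn.trans_lt (Nat.lt_pow_succ_log_self hg M)) two_ne_zero

lemma pow_mul_divModCount_sq_le_of_add_le (hg : 0 < g) (hke : k ≤ e) (ht : g ^ t ≤ M)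
    (hi : 4 * e ≤ i) (hit : i + e ≤ t) (s : ℕ) :
    g ^ e * (g ^ k * divModCount (· ^ 2) (g ^ i) (g ^ k) s M) ≤
      (g ^ e + 17 * (g ^ k) ^ 2) * M := by
  have pow_le_M {j : ℕ} (hj : j ≤ t) : g ^ j ≤ M := (Nat.pow_le_pow_right hg hj).trans ht
  have hbound := mul_divModCount_sq_le (P := g ^ (i + k - 2 * e)) (Q' := g ^ (2 * e - k))
    (K := g ^ k) (by positivity) (by positivity) (by positivity)
    (by rw [← pow_add]; exact pow_dvd_pow g (by lia)) s M
  have hQ : g ^ (2 * e - k) * g ^ k = g ^ e * g ^ e := by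
    rw [← pow_add, ← pow_add]
    congr 1
    lia
  have hq : g ^ (i + k - 2 * e) * g ^ (2 * e - k) = g ^ i := by
    rw [← pow_add]
    congr 1
    lia
  have hPQ : g ^ (i + k - 2 * e) * (g ^ e * g ^ e) = g ^ i * g ^ k := by
    rw [← hQ, ← mul_assoc, hq]
  rw [hQ, hq, hPQ] at hbound
  have hH : 0 < g ^ e := by positivity
  have hτ : #(g ^ e * g ^ e).divisors ≤ 4 * g ^ e := card_divisors_mul_self_le hH
  have hHM : g ^ e * g ^ e ≤ M := pow_add g e e ▸ pow_le_M (by lia)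
  have hqM : g ^ i * g ^ e ≤ M := pow_add g i e ▸ pow_le_M hit
  set H := g ^ e
  set K := g ^ k
  set S := divModCount (· ^ 2) (g ^ i) K s M
  refine Nat.le_of_mul_le_mul_left ?_ hH
  calc H * (H * (K * S)) = K * (H * H * S) := by ring
    _ ≤ K * (M * g ^ (2 * e - k) + 2 * (4 * H * (M + M)) + H * H * (g ^ i * K)) := by
        refine Nat.mul_le_mul_left K (hbound.trans ?_)
        gcongr
    _ = M * (g ^ (2 * e - k) * K) + 16 * K * H * M + H * K ^ 2 * (g ^ i * H) := by ring
    _ ≤ M * (H * H) + 16 * K ^ 2 * H * M + H * K ^ 2 * M := by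
        rw [hQ]
        gcongr
        exact Nat.le_self_pow two_ne_zero K
    _ = H * ((H + 17 * K ^ 2) * M) := by ring

lemma pow_mul_divModCount_sq_le_of_lt (hg : 0 < g) (ht : g ^ t ≤ M) (hM : M ≤ g ^ (t + 1))
    (hti : t + 1 + e ≤ i) (hit : i + 2 * e ≤ 2 * t) (hs : s < g ^ k) :
    g ^ e * (g ^ k * divModCount (· ^ 2) (g ^ i) (g ^ k) s M) ≤ (g ^ e + 5 * g ^ k) * M := by
  have pow_le_M {j : ℕ} (hj : j ≤ t) : g ^ j ≤ M := (Nat.pow_le_pow_right hg hj).trans ht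
  have hquot : g ^ e * (M ^ 2 / g ^ i) ≤ M := by
    have hMi : M * g ^ e ≤ g ^ i :=
      calc M * g ^ e ≤ g ^ (t + 1) * g ^ e := Nat.mul_le_mul_right _ hM
        _ = g ^ (t + 1 + e) := (pow_add _ _ _).symm
        _ ≤ g ^ i := Nat.pow_le_pow_right hg hti
    refine (Nat.mul_div_le_mul_div_assoc _ _ _).trans (Nat.div_le_of_le_mul ?_)
    calc g ^ e * M ^ 2 = M * g ^ e * M := by ring
      _ ≤ g ^ i * M := Nat.mul_le_mul_right M hMi
  have hsqrt : g ^ e * (g ^ i).sqrt ≤ M := by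
    have : (g ^ i).sqrt ≤ g ^ (t - e) := by
      rw [← Nat.sqrt_eq' (g ^ (t - e)), ← pow_mul]
      exact Nat.sqrt_le_sqrt (Nat.pow_le_pow_right hg (by lia))
    calc g ^ e * (g ^ i).sqrt ≤ g ^ e * g ^ (t - e) := Nat.mul_le_mul_left _ this
      _ = g ^ (e + (t - e)) := (pow_add _ _ _).symm
      _ ≤ M := pow_le_M (by lia)
  have hH : g ^ e ≤ M := pow_le_M (by lia)
  calc g ^ e * (g ^ k * divModCount (· ^ 2) (g ^ i) (g ^ k) s M)
      ≤ g ^ e * (M + g ^ k * (M ^ 2 / g ^ i + (g ^ i).sqrt + 3)) :=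
        Nat.mul_le_mul_left _ (mul_divModCount_sq_le_of_lt (by positivity) hs M)
    _ = g ^ e * M + g ^ k * (g ^ e * (M ^ 2 / g ^ i) + g ^ e * (g ^ i).sqrt + 3 * g ^ e) := by ring
    _ ≤ g ^ e * M + g ^ k * (M + M + 3 * M) := by gcongr
    _ = (g ^ e + 5 * g ^ k) * M := by ring

lemma pow_mul_card_filter_sq_lt_le (hg : 0 < g) (ht : g ^ t ≤ M) {j : ℕ}
    (hj : j + 2 * e ≤ 2 * t) : g ^ e * #{n ∈ range M | n ^ 2 < g ^ j} ≤ M := by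
  have hsub : {n ∈ range M | n ^ 2 < g ^ j} ⊆ range (g ^ (t - e)) := by
    intro n hn
    have hn : n ^ 2 < g ^ j := (mem_filter.1 hn).2
    refine mem_range.2 (lt_of_pow_lt_pow_left₀ 2 (Nat.zero_le _) (hn.trans_le ?_))
    rw [← pow_mul]
    exact Nat.pow_le_pow_right hg (by lia)
  calc g ^ e * #{n ∈ range M | n ^ 2 < g ^ j} ≤ g ^ e * g ^ (t - e) := by
        gcongr
        exact (card_le_card hsub).trans_eq (card_range _)
    _ = g ^ t := by
        rw [← pow_add]
        congr 1
        lia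
    _ ≤ M := ht

/-- The positions near the ends and the middle of the range `0, …, 2 * t + 1` of digit positions of
the squares of `n ≤ g ^ (t + 1)`. At all other positions the digit blocks of these squares are
equidistributed with an error of order `g ^ (-e)`. -/
def boundaryPositions (e t : ℕ) : Finset ℕ :=
  range (4 * e) ∪ Ico (t + 1 - e) (t + 1 + e) ∪ Ico (2 * t + 1 - 3 * e) (2 * t + 2)

lemma card_boundaryPositions_le (e t : ℕ) : #(boundaryPositions e t) ≤ 9 * e + 1 := by
  refine ((card_union_le _ _).trans (Nat.add_le_add_right (card_union_le _ _) _)).trans ?_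
  rw [card_range, Nat.card_Ico, Nat.card_Ico]
  lia

lemma pow_mul_divModCount_sq_le_of_notMem_boundaryPositions (hg : 0 < g) (hke : k ≤ e)
    (ht : g ^ t ≤ M) (hM : M ≤ g ^ (t + 1)) (hit : i < 2 * t + 2)
    (hi : i ∉ boundaryPositions e t) (hs : s < g ^ k) :
    g ^ e * (g ^ k * divModCount (· ^ 2) (g ^ i) (g ^ k) s M) ≤
      (g ^ e + 17 * (g ^ k) ^ 2) * M := by
  simp only [boundaryPositions, mem_union, mem_range, mem_Ico] at hi
  rcases lt_or_ge i (t + 1) with hlow | hhigh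
  · exact pow_mul_divModCount_sq_le_of_add_le hg hke ht (by lia) (by lia) s
  · refine (pow_mul_divModCount_sq_le_of_lt hg ht hM (by lia) (by lia) hs).trans ?_
    exact Nat.mul_le_mul_right M (Nat.add_le_add_left
      (Nat.mul_le_mul (by norm_num) (Nat.le_self_pow two_ne_zero _)) _)

lemma abs_divModCount_sq_sub_le (hg : 0 < g) (hke : k ≤ e) (ht : g ^ t ≤ M)
    (hM : M ≤ g ^ (t + 1)) (hit : i < 2 * t + 2) (hi : i ∉ boundaryPositions e t)
    (hs : s < g ^ k) :
    |divModCount (· ^ 2) (g ^ i) (g ^ k) s M - (M : ℝ) / g ^ k| ≤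
      17 * ((g : ℝ) ^ k) ^ 2 / g ^ e * M := by
  have hupper : ∀ s' ∈ range (g ^ k), (divModCount (· ^ 2) (g ^ i) (g ^ k) s' M : ℝ) ≤
      M / g ^ k + 17 * (g : ℝ) ^ k / g ^ e * M := by
    intro s' hs'
    have := pow_mul_divModCount_sq_le_of_notMem_boundaryPositions hg hke ht hM hit hi
      (mem_range.1 hs')
    rify at this
    field_simp
    linarith
  have hsum : ∑ s' ∈ range (g ^ k), (divModCount (· ^ 2) (g ^ i) (g ^ k) s' M : ℝ) =
      #(range (g ^ k)) * (M / g ^ k) := by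
    rw [← Nat.cast_sum, sum_divModCount _ _ (by positivity), card_range]
    push_cast
    field_simp
  refine (abs_sub_le_of_forall_le_of_sum_eq hupper hsum (mem_range.2 hs)).trans_eq ?_
  rw [card_range]
  push_cast
  ring

lemma abs_digitBlockCount_sq_div_sub_le (hg : 0 < g) (hke : k ≤ e) (ht : g ^ t ≤ M)
    (hM : M ≤ g ^ (t + 1)) (hit : i < 2 * t + 2) (hi : i ∉ boundaryPositions e t)
    (hs : s < g ^ k) :
    |(digitBlockCount g (· ^ 2) k s M i : ℝ) / M - 1 / (g : ℝ) ^ k| ≤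
      18 * ((g : ℝ) ^ k) ^ 2 / g ^ e := by
  have hMpos : (0 : ℝ) < M := by exact_mod_cast (Nat.pow_pos hg).trans_le ht
  have hresidue := abs_divModCount_sq_sub_le hg hke ht hM hit hi hs
  have hle := digitBlockCount_le_divModCount g (· ^ 2) k s M i
  have hge := divModCount_le_digitBlockCount_add hg (· ^ 2) k s M i
  have hshort : g ^ e * #{n ∈ range M | n ^ 2 < g ^ (i + k)} ≤ (g ^ k) ^ 2 * M := by
    simp only [boundaryPositions, mem_union, mem_range, mem_Ico] at hi
    exact (pow_mul_card_filter_sq_lt_le hg ht (by lia)).trans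
      (Nat.le_mul_of_pos_left M (by positivity))
  set short := #{n ∈ range M | n ^ 2 < g ^ (i + k)}
  rify at hle hge hshort
  have hshort_le : (short : ℝ) ≤ ((g : ℝ) ^ k) ^ 2 / g ^ e * M := by
    field_simp
    linarith
  have hdiv : (digitBlockCount g (· ^ 2) k s M i : ℝ) / M - 1 / (g : ℝ) ^ k =
      (digitBlockCount g (· ^ 2) k s M i - (M : ℝ) / g ^ k) / M := by
    field_simp
  rw [hdiv, abs_div, Nat.abs_cast, div_le_iff₀ hMpos]
  have hsplit : 18 * ((g : ℝ) ^ k) ^ 2 / g ^ e * M =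
      17 * ((g : ℝ) ^ k) ^ 2 / g ^ e * M + ((g : ℝ) ^ k) ^ 2 / g ^ e * M := by ring
  rw [abs_le] at hresidue ⊢
  constructor <;> linarith

lemma tendsto_two_mul_log_add_two (hg : 1 < g) :
    Tendsto (fun M => 2 * Nat.log g M + 2) atTop atTop := by
  refine tendsto_atTop.2 fun b => ?_
  filter_upwards [eventually_ge_atTop (g ^ b)] with M hM
  have := Nat.le_log_of_pow_le hg hM
  lia

lemma exists_card_filter_digitBlockCount_sq_le (hg : 1 < g) (hs : s < g ^ k) {η : ℝ}
    (hη : 0 < η) :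
    ∃ B : ℕ, ∀ M ≠ 0, #{i ∈ range (2 * Nat.log g M + 2) |
      η < |(digitBlockCount g (· ^ 2) k s M i : ℝ) / M - 1 / (g : ℝ) ^ k|} ≤ B := by
  have hsmall : Tendsto (fun e : ℕ => 18 * ((g : ℝ) ^ k) ^ 2 / g ^ e) atTop (𝓝 0) :=
    (tendsto_pow_atTop_atTop_of_one_lt (by exact_mod_cast hg)).const_div_atTop _
  obtain ⟨e, he, hke⟩ := ((hsmall.eventually_le_const hη).and (eventually_ge_atTop k)).exists
  refine ⟨9 * e + 1, fun M hM => ?_⟩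
  refine (card_le_card fun i hi => ?_).trans (card_boundaryPositions_le e (Nat.log g M))
  obtain ⟨hit, hfar⟩ := mem_filter.1 hi
  by_contra hbulk
  exact hfar.not_ge ((abs_digitBlockCount_sq_div_sub_le (by lia) hke (Nat.pow_log_le_self g hM)
    (Nat.lt_pow_succ_log_self hg M).le (mem_range.1 hit) hbulk hs).trans he)

theorem tendsto_innerNu_digitWords_sq_div (hg : 1 < g) {σ : List ℕ} (hσ : σ ≠ [])
    (hσg : ∀ d ∈ σ, d < g) :
    Tendsto (fun M : ℕ => innerNu (digitWords g (· ^ 2)) σ M /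
      ((M : ℝ) * (2 * Nat.log g M + 2 : ℕ))) atTop (𝓝 (1 / (g : ℝ) ^ σ.length)) := by
  set k := σ.length
  set s := Nat.ofDigits g σ.reverse
  have hs : s < g ^ k := by
    simpa using Nat.ofDigits_lt_base_pow_length hg fun d hd => hσg d (List.mem_reverse.1 hd)
  have hK : (1 : ℝ) ≤ (g : ℝ) ^ k := by exact_mod_cast Nat.one_le_pow k g (by lia)
  have haverage : Tendsto (fun M => (∑ i ∈ range (2 * Nat.log g M + 2),
      (digitBlockCount g (· ^ 2) k s M i : ℝ) / M) / #(range (2 * Nat.log g M + 2)))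
      atTop (𝓝 (1 / (g : ℝ) ^ k)) := by
    refine tendsto_average_of_card_exceptional_le (C := 1) ?_ (fun M i _ => ?_) fun η hη => ?_
    · simpa only [card_range] using tendsto_two_mul_log_add_two hg
    · refine abs_sub_le_of_nonneg_of_le (by positivity) (div_le_one_of_le₀ ?_ (by positivity))
        (by positivity) (div_le_one_of_le₀ hK (by positivity))
      exact_mod_cast digitBlockCount_le g _ k s M i
    · obtain ⟨B, hB⟩ := exists_card_filter_digitBlockCount_sq_le hg hs hη
      exact ⟨B, (eventually_ne_atTop 0).mono hB⟩
  refine haverage.congr fun M => ?_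
  rw [innerNu_digitWords hg hσ hσg fun n hn => length_digs_sq_le hg hn.le, ← sum_div, card_range,
    div_div, Nat.cast_sum]

lemma tendsto_length_digs_sq_div (hg : 1 < g) :
    Tendsto (fun M : ℕ => (digs g (M ^ 2)).length / ((M : ℝ) * (2 * Nat.log g M + 2 : ℕ)))
      atTop (𝓝 0) := by
  refine squeeze_zero (fun M => by positivity) (fun M => ?_) tendsto_one_div_atTop_nhds_zero_nat
  rw [div_mul_eq_div_div_swap]
  gcongr
  refine div_le_one_of_le₀ ?_ (Nat.cast_nonneg _)
  exact_mod_cast length_digs_sq_le hg le_rfl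

lemma tendsto_self_div_mul_log (hg : 1 < g) :
    Tendsto (fun M : ℕ => (M : ℝ) / ((M : ℝ) * (2 * Nat.log g M + 2 : ℕ))) atTop (𝓝 0) := by
  refine ((tendsto_natCast_atTop_atTop.comp
    (tendsto_two_mul_log_add_two hg)).const_div_atTop (1 : ℝ)).congr' ?_
  filter_upwards [eventually_ne_atTop 0] with M hM
  rw [Function.comp_apply, div_mul_eq_div_div, div_self (Nat.cast_ne_zero.2 hM)]

end Squares

/-- Besicovitch: the number `0.(1)(4)(9)(16)(25)…`, formed by concatenating the base-`g`
expansions of the squares, is normal to base `g`. -/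
theorem besicovitch_squares_normal (g : ℕ) (hg : 2 ≤ g) :
    IsNormalSeq g (concatDigit g fun n => n ^ 2) :=
  isNormalSeq_concatDigit hg rfl (fun _ => pow_ne_zero 2) (tendsto_self_div_mul_log hg)
    (tendsto_length_digs_sq_div hg) fun _ hσ hσg => tendsto_innerNu_digitWords_sq_div hg hσ hσg
end
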